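/- arXiv:1710.02893 — 2 statements merged into one kernel-verified Lean document; each statement's English description precedes it below -/
import Mathlib

section
/- Let f be a germ of holomorphic function at 0 ∈ ℂⁿ, n ≥ 2, with f(z) = z₁ ⋯ zₙ + O(|z|^{n+1}), and let M = {Re(f) = 0}. Suppose f is right equivalent to the product of all coordinates, i.e., there exists a germ of biholomorphism σ : (ℂⁿ,0) → (ℂⁿ,0) with f ∘ σ⁻¹(z) = z₁ ⋯ zₙ. Then there exist a germ of volume-preserving biholomorphism Φ : (ℂⁿ,0) → (ℂⁿ,0) and a germ of automorphism Ψ : (ℂ,0) → (ℂ,0) such that Φ(M) = {Re(Ψ(z₁ ⋯ zₙ)) = 0} as germs of sets at 0, and Ψ is uniquely determined by f up to a sign. -/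
/-!
Write `p z = ∏ i, z i`. The argument normalizes volume densities relative to `p`, using the fields
`z_k ∂/∂z_k - z_N ∂/∂z_N`: they are tangent to the fibres of `p`, divergence free, and generate
commuting circle actions.

*Existence.* Let `g` be the Jacobian determinant of `σ⁻¹`. If `χ` has Jacobian determinant `g` and
`p ∘ χ = λ ∘ p`, then `Φ = χ ∘ σ` is volume-preserving and `f ∘ Φ⁻¹ = Ψ ∘ p` with `Ψ = λ⁻¹`. Such
a `χ` is a composition of two kinds of maps. The difference of a function and its average along
a circle action is a derivative along the corresponding field (`eulerDeriv_eulerPrim`); hence moving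
each point along the flow for a suitable time, depending on the point, replaces a nonvanishing
density by its average without changing `p` (`moser_step`). After one such step for each field, the
density is invariant (`exists_invariant_density`), hence of the form `a ∘ p`
(`exists_function_of_prod`). Finally the rescaling of one coordinate that turns `p` into `λ ∘ p` has
Jacobian determinant `λ' ∘ p` (`det_scale`), so a primitive `λ` of `a` finishes the construction
(`exists_normal_form`).

*Uniqueness.* Two normal forms of `f` differ by a volume-preserving `χ` with `p ∘ χ = λ ∘ p`. Such
a `χ` permutes the coordinate hyperplanes (`exists_perm`); up to a permutation of the coordinates it
is `z ↦ (z_i e^{v_i(z)})_i`, with constant Jacobian determinant `±1`. Undoing the factors `e^{v_k}`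
one after another along the fields above, its Jacobian determinant equals `λ' ∘ p` plus derivatives
along these fields (`det_diagMap`). Averages kill these derivatives (`eq_zero_of_sum_avg_zero`),
so `λ' = ±1` and `λ t = ± t`.
-/

open Filter Topology

/-- Wirtinger derivative ∂/∂z_j of a (complex-valued) function at `p`:
`(1/2)(∂F/∂x_j − i ∂F/∂y_j)`. -/
noncomputable def wirtZ {n : ℕ} (F : (Fin n → ℂ) → ℂ) (j : Fin n) (p : Fin n → ℂ) : ℂ :=
  (fderiv ℝ F p (Pi.single j 1) - Complex.I * fderiv ℝ F p (Pi.single j Complex.I)) / 2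

/-- Wirtinger derivative ∂/∂z̄_j of a (complex-valued) function at `p`:
`(1/2)(∂F/∂x_j + i ∂F/∂y_j)`. -/
noncomputable def wirtZbar {n : ℕ} (F : (Fin n → ℂ) → ℂ) (j : Fin n) (p : Fin n → ℂ) : ℂ :=
  (fderiv ℝ F p (Pi.single j 1) + Complex.I * fderiv ℝ F p (Pi.single j Complex.I)) / 2

/-- The germ `M = {F = 0}` at `0` is Levi-flat: for every point `p` of `M* = M \ Sing(M)`
near `0` and every `v` with `Σ_j F_{z_j}(p) v_j = 0` one has
`Σ_{i,j} F_{z_i z̄_j}(p) v_i conj(v_j) = 0`. -/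
def LeviFlatGerm {n : ℕ} (F : (Fin n → ℂ) → ℝ) : Prop :=
  ∀ᶠ p in 𝓝 (0 : Fin n → ℂ), F p = 0 → fderiv ℝ F p ≠ 0 →
    ∀ v : Fin n → ℂ,
      (∑ j, wirtZ (fun z => ((F z : ℝ) : ℂ)) j p * v j) = 0 →
      (∑ i, ∑ j, wirtZbar (wirtZ (fun z => ((F z : ℝ) : ℂ)) i) j p * v i * (starRingEnd ℂ) (v j)) = 0

/-- `F` is irreducible in the ring of germs at `0` of real-valued real-analytic functions:
in any factorization `F = g·h` one of the factors is a unit (i.e. does not vanish at `0`). -/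
def IrreducibleRGerm {n : ℕ} (F : (Fin n → ℂ) → ℝ) : Prop :=
  ∀ g h : (Fin n → ℂ) → ℝ, AnalyticAt ℝ g 0 → AnalyticAt ℝ h 0 →
    (∀ᶠ z in 𝓝 (0 : Fin n → ℂ), F z = g z * h z) → g 0 ≠ 0 ∨ h 0 ≠ 0

/-- `φ` is a germ of biholomorphism `(ℂⁿ,0) → (ℂⁿ,0)` with local inverse `ι`. -/
def IsGermBiholo {n : ℕ} (φ ι : (Fin n → ℂ) → (Fin n → ℂ)) : Prop :=
  AnalyticAt ℂ φ 0 ∧ AnalyticAt ℂ ι 0 ∧ φ 0 = 0 ∧ ι 0 = 0 ∧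
  (∀ᶠ z in 𝓝 (0 : Fin n → ℂ), ι (φ z) = z) ∧ (∀ᶠ z in 𝓝 (0 : Fin n → ℂ), φ (ι z) = z)

/-- `φ` is volume-preserving (isochore): the determinant of its complex Jacobian is
identically `1` near `0`. -/
def IsVolumePreserving {n : ℕ} (φ : (Fin n → ℂ) → (Fin n → ℂ)) : Prop :=
  ∀ᶠ z in 𝓝 (0 : Fin n → ℂ), LinearMap.det ((fderiv ℂ φ z).toLinearMap) = 1

/-- `ψ` is a germ of automorphism of `(ℂ,0)`. -/
def IsGermAuto (ψ : ℂ → ℂ) : Prop :=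
  AnalyticAt ℂ ψ 0 ∧ ψ 0 = 0 ∧ deriv ψ 0 ≠ 0

/-! ### Analytic preliminaries and germs of biholomorphisms -/

theorem ContinuousMultilinearMap.continuous_compContinuousLinearMap_diag
    {E F : Type*} [NormedAddCommGroup E] [NormedSpace ℂ E] [NormedAddCommGroup F] [NormedSpace ℂ F]
    {m : ℕ} (p : ContinuousMultilinearMap ℂ (fun _ : Fin m => E) F) {R : ℝ → E →L[ℂ] E}
    (hR : Continuous R) :
    Continuous fun θ => p.compContinuousLinearMap (fun _ : Fin m => R θ) := by
  have h1 : Continuous fun θ : ℝ =>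
      (ContinuousMultilinearMap.compContinuousLinearMapContinuousMultilinear ℂ
        (fun _ : Fin m => E) (fun _ : Fin m => E) F) (fun _ => R θ) :=
    (ContinuousMultilinearMap.cont _).comp (continuous_pi fun _ => hR)
  exact h1.clm_apply continuous_const

/-- A weighted integral of the pullbacks of an analytic germ under linear contractions is analytic:
the power series can be integrated term by term. -/
theorem analyticAt_paramIntegral {E : Type*} [NormedAddCommGroup E] [NormedSpace ℂ E]
    {a b : ℝ} {R : ℝ → E →L[ℂ] E} (hR : Continuous R)
    (hR1 : ∀ θ ∈ Set.uIoc a b, ‖R θ‖ ≤ 1) {w : ℝ → ℂ} (hw : Continuous w)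
    {G : E → ℂ} (hG : AnalyticAt ℂ G 0) :
    AnalyticAt ℂ (fun z => ∫ θ in a..b, w θ * G (R θ z)) 0 := by
  obtain ⟨p, r, hp⟩ := hG
  obtain ⟨C, hC⟩ : ∃ C, ∀ θ ∈ Set.uIoc a b, ‖w θ‖ ≤ C := by
    obtain ⟨C, hC⟩ := (isCompact_uIcc (a := a) (b := b)).exists_bound_of_continuousOn hw.continuousOn
    exact ⟨C, fun θ hθ => hC θ (Set.uIoc_subset_uIcc hθ)⟩
  let Q : ∀ m : ℕ, ℝ → ContinuousMultilinearMap ℂ (fun _ : Fin m => E) ℂ := fun m θ =>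
    w θ • (p m).compContinuousLinearMap (fun _ => R θ)
  have hQc : ∀ m, Continuous (Q m) := fun m =>
    hw.smul ((p m).continuous_compContinuousLinearMap_diag hR)
  have hQn : ∀ m, ∀ θ ∈ Set.uIoc a b, ‖Q m θ‖ ≤ C * ‖p m‖ := by
    intro m θ hθ
    have h1 : ‖(p m).compContinuousLinearMap (fun _ => R θ)‖ ≤ ‖p m‖ := by
      refine (ContinuousMultilinearMap.norm_compContinuousLinearMap_le _ _).trans ?_
      refine mul_le_of_le_one_right (norm_nonneg _) ?_
      exact Finset.prod_le_one (fun _ _ => norm_nonneg _) (fun _ _ => hR1 θ hθ)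
    rw [norm_smul]
    exact mul_le_mul (hC θ hθ) h1 (norm_nonneg _) ((norm_nonneg _).trans (hC θ hθ))
  let q : FormalMultilinearSeries ℂ E ℂ := fun m => ∫ θ in a..b, Q m θ
  have hqn : ∀ m, ‖q m‖ ≤ C * ‖p m‖ * |b - a| := fun m =>
    intervalIntegral.norm_integral_le_of_norm_le_const (hQn m)
  refine ⟨q, r, ⟨?_, hp.r_pos, ?_⟩⟩
  · refine ENNReal.le_of_forall_nnreal_lt fun s hs => ?_
    obtain ⟨K, hK, hK'⟩ := p.norm_mul_pow_le_of_lt_radius (hs.trans_le hp.r_le)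
    refine q.le_radius_of_bound (|C| * |b - a| * K) fun m => ?_
    calc ‖q m‖ * (s : ℝ) ^ m ≤ (C * ‖p m‖ * |b - a|) * (s : ℝ) ^ m := by gcongr; exact hqn m
      _ ≤ (|C| * ‖p m‖ * |b - a|) * (s : ℝ) ^ m := by gcongr; exact le_abs_self C
      _ = |C| * |b - a| * (‖p m‖ * (s : ℝ) ^ m) := by ring
      _ ≤ _ := by gcongr; exact hK' m
  · intro y hy
    have happ : ∀ m, q m (fun _ => y) = ∫ θ in a..b, w θ * p m (fun _ => R θ y) := by
      intro m
      have h1 := (ContinuousMultilinearMap.apply ℂ (fun _ : Fin m => E) ℂ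
        (fun _ => y)).intervalIntegral_comp_comm ((hQc m).intervalIntegrable
          (μ := MeasureTheory.volume) a b)
      exact h1.symm
    simp only [happ, zero_add]
    have hy' : ‖y‖ₑ < r := by simpa using hy
    have hsy : Summable fun m => ‖p m‖ * ‖y‖ ^ m := by
      have := p.summable_norm_mul_pow (r := ‖y‖₊) (lt_of_lt_of_le hy' hp.r_le)
      simpa using this
    have hterm : ∀ m, Continuous fun θ => w θ * p m (fun _ => R θ y) := by
      intro m
      exact hw.mul ((p m).cont.comp (continuous_pi fun _ => hR.clm_apply continuous_const))
    refine intervalIntegral.hasSum_integral_of_dominated_convergence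
      (fun m _ => |C| * (‖p m‖ * ‖y‖ ^ m)) (fun m => (hterm m).aestronglyMeasurable) ?_ ?_ ?_ ?_
    · refine fun m => Eventually.of_forall fun θ hθ => ?_
      rw [norm_mul]
      refine mul_le_mul ((hC θ hθ).trans (le_abs_self C)) ?_ (norm_nonneg _) (abs_nonneg _)
      refine ((p m).le_opNorm _).trans ?_
      gcongr
      simp only [Finset.prod_const, Finset.card_univ, Fintype.card_fin]
      gcongr
      exact ((R θ).le_opNorm y).trans (mul_le_of_le_one_left (norm_nonneg _) (hR1 θ hθ))
    · exact Eventually.of_forall fun θ _ => hsy.mul_left _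
    · exact intervalIntegrable_const
    · refine Eventually.of_forall fun θ hθ => ?_
      refine HasSum.mul_left _ ?_
      have hR' : R θ y ∈ Metric.eball (0 : E) r := by
        have : ‖R θ y‖ₑ ≤ ‖y‖ₑ := by
          rw [enorm_le_iff_norm_le]
          exact ((R θ).le_opNorm y).trans (mul_le_of_le_one_left (norm_nonneg _) (hR1 θ hθ))
        simpa using lt_of_le_of_lt this hy'
      simpa using hp.hasSum hR'

theorem analytic_ball {E F : Type*} [NormedAddCommGroup E] [NormedSpace ℂ E]
    [NormedAddCommGroup F] [NormedSpace ℂ F] [CompleteSpace F] {G : E → F} (hG : AnalyticAt ℂ G 0) :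
    ∃ r > 0, AnalyticOnNhd ℂ G (Metric.ball 0 r) := by
  obtain ⟨r, hr, h⟩ := Metric.eventually_nhds_iff_ball.1 hG.eventually_analyticAt
  exact ⟨r, hr, h⟩

/-- The ring of germs of holomorphic functions is an integral domain. -/
theorem germ_mul_eq_zero {E : Type*} [NormedAddCommGroup E] [NormedSpace ℂ E]
    {G H : E → ℂ} (hG : AnalyticAt ℂ G 0) (hH : AnalyticAt ℂ H 0)
    (h : ∀ᶠ z in 𝓝 (0 : E), G z * H z = 0) :
    (∀ᶠ z in 𝓝 (0 : E), G z = 0) ∨ (∀ᶠ z in 𝓝 (0 : E), H z = 0) := by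
  obtain ⟨r, hr, hr'⟩ := Metric.eventually_nhds_iff_ball.1
    (h.and (hG.eventually_analyticAt.and hH.eventually_analyticAt))
  by_cases hz : ∀ z ∈ Metric.ball (0 : E) r, G z = 0
  · exact .inl (Metric.eventually_nhds_iff_ball.2 ⟨r, hr, hz⟩)
  push Not at hz
  obtain ⟨z, hz, hGz⟩ := hz
  right
  have h0 : H =ᶠ[𝓝 z] 0 := by
    filter_upwards [(hr' z hz).2.1.continuousAt.eventually_ne hGz,
      Metric.isOpen_ball.mem_nhds hz] with y hy hy'
    exact (mul_eq_zero.1 (hr' y hy').1).resolve_left hy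
  have := AnalyticOnNhd.eqOn_of_preconnected_of_eventuallyEq
    (fun y hy => (hr' y hy).2.2) (fun y _ => analyticAt_const)
    (convex_ball (0 : E) r).isPreconnected hz h0
  exact Metric.eventually_nhds_iff_ball.2 ⟨r, hr, this⟩

theorem germ_prod_eq_zero {E ι : Type*} [NormedAddCommGroup E] [NormedSpace ℂ E]
    {G : ι → E → ℂ} (hG : ∀ i, AnalyticAt ℂ (G i) 0) (s : Finset ι)
    (h : ∀ᶠ z in 𝓝 (0 : E), ∏ i ∈ s, G i z = 0) :
    ∃ i ∈ s, ∀ᶠ z in 𝓝 (0 : E), G i z = 0 := by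
  classical
  induction s using Finset.induction_on with
  | empty =>
    have h' : ∀ᶠ z in 𝓝 (0 : E), False := h.mono fun z hz => one_ne_zero hz
    exact absurd h'.self_of_nhds id
  | insert i s hi ih =>
    simp only [Finset.prod_insert hi] at h
    rcases germ_mul_eq_zero (hG i) (Finset.analyticAt_fun_prod _ fun j _ => hG j) h with h | h
    · exact ⟨i, by simp, h⟩
    · obtain ⟨j, hj, hj'⟩ := ih h
      exact ⟨j, by simp [hj], hj'⟩

theorem hasDerivAt_comp_curve {E : Type*} [NormedAddCommGroup E] [NormedSpace ℂ E]
    {G : E → ℂ} {γ : ℝ → E} {γ' : E} {t : ℝ} (hG : DifferentiableAt ℂ G (γ t))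
    (hγ : HasDerivAt γ γ' t) : HasDerivAt (fun s => G (γ s)) (fderiv ℂ G (γ t) γ') t :=
  (hG.hasFDerivAt.restrictScalars ℝ).comp_hasDerivAt t hγ

section Biholo
variable {n : ℕ}

/-- The holomorphic inverse function theorem, in terms of the Jacobian determinant. -/
theorem isGermBiholo_of_det {φ : (Fin n → ℂ) → (Fin n → ℂ)} (hφ : AnalyticAt ℂ φ 0)
    (h0 : φ 0 = 0) (hdet : LinearMap.det ((fderiv ℂ φ 0).toLinearMap) ≠ 0) :
    ∃ ι, IsGermBiholo φ ι := by
  have hdet' : (fderiv ℂ φ 0).det ≠ 0 := hdet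
  let e := (fderiv ℂ φ 0).toContinuousLinearEquivOfDetNeZero hdet'
  have he : HasFDerivAt φ (e : (Fin n → ℂ) →L[ℂ] (Fin n → ℂ)) 0 := by
    have : (e : (Fin n → ℂ) →L[ℂ] (Fin n → ℂ)) = fderiv ℂ φ 0 :=
      ContinuousLinearMap.coe_toContinuousLinearEquivOfDetNeZero _ _
    rw [this]
    exact hφ.differentiableAt.hasFDerivAt
  have hc : ContDiffAt ℂ ⊤ φ 0 := hφ.contDiffAt
  have hs := hc.hasStrictFDerivAt' he (by simp)
  refine ⟨hc.localInverse he (by simp), hφ, ?_, h0, ?_, ?_, ?_⟩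
  · have := hc.to_localInverse he (by simp)
    rw [h0] at this
    exact this.analyticAt
  · have := hs.localInverse_apply_image
    rw [h0] at this
    exact this
  · exact hs.eventually_left_inverse
  · have := hs.eventually_right_inverse
    rw [h0] at this
    exact this

theorem IsGermBiholo.tendsto {φ ι : (Fin n → ℂ) → (Fin n → ℂ)} (h : IsGermBiholo φ ι) :
    Tendsto φ (𝓝 0) (𝓝 0) := by
  simpa [h.2.2.1] using h.1.continuousAt.tendsto

theorem IsGermBiholo.symm {φ ι : (Fin n → ℂ) → (Fin n → ℂ)} (h : IsGermBiholo φ ι) :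
    IsGermBiholo ι φ :=
  ⟨h.2.1, h.1, h.2.2.2.1, h.2.2.1, h.2.2.2.2.2, h.2.2.2.2.1⟩

theorem IsGermBiholo.comp {φ ι φ' ι' : (Fin n → ℂ) → (Fin n → ℂ)} (h : IsGermBiholo φ ι)
    (h' : IsGermBiholo φ' ι') : IsGermBiholo (fun z => φ (φ' z)) (fun z => ι' (ι z)) := by
  have e := h.2.2.1
  have e' := h'.2.2.1
  have i := h.2.2.2.1
  have i' := h'.2.2.2.1
  refine ⟨AnalyticAt.fun_comp (by rw [e']; exact h.1) h'.1,
    AnalyticAt.fun_comp (by rw [i]; exact h'.2.1) h.2.1, by simp [e, e'], by simp [i, i'], ?_, ?_⟩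
  · filter_upwards [h'.2.2.2.2.1, h'.tendsto.eventually h.2.2.2.2.1] with z h1 h2
    rw [h2, h1]
  · filter_upwards [h.2.2.2.2.2, h.symm.tendsto.eventually h'.2.2.2.2.2] with z h1 h2
    rw [h2, h1]

theorem det_fderiv_comp {φ χ : (Fin n → ℂ) → (Fin n → ℂ)} (hφ : AnalyticAt ℂ φ 0)
    (hχ : AnalyticAt ℂ χ 0) (h0 : χ 0 = 0) :
    ∀ᶠ z in 𝓝 (0 : Fin n → ℂ), LinearMap.det ((fderiv ℂ (fun y => φ (χ y)) z).toLinearMap) =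
      LinearMap.det ((fderiv ℂ φ (χ z)).toLinearMap) *
        LinearMap.det ((fderiv ℂ χ z).toLinearMap) := by
  have ht : Tendsto χ (𝓝 0) (𝓝 0) := by simpa [h0] using hχ.continuousAt.tendsto
  filter_upwards [hχ.eventually_analyticAt, ht.eventually hφ.eventually_analyticAt] with z h1 h2
  rw [fderiv_fun_comp z h2.differentiableAt h1.differentiableAt, ← LinearMap.det_comp]
  rfl

theorem det_fderiv_congr {φ χ : (Fin n → ℂ) → (Fin n → ℂ)} (h : φ =ᶠ[𝓝 0] χ) :
    ∀ᶠ z in 𝓝 (0 : Fin n → ℂ), LinearMap.det ((fderiv ℂ φ z).toLinearMap) =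
      LinearMap.det ((fderiv ℂ χ z).toLinearMap) := by
  filter_upwards [h.eventually_nhds] with z hz
  rw [EventuallyEq.fderiv_eq hz]

theorem IsGermBiholo.det_mul {φ ι : (Fin n → ℂ) → (Fin n → ℂ)} (h : IsGermBiholo φ ι) :
    ∀ᶠ z in 𝓝 (0 : Fin n → ℂ), LinearMap.det ((fderiv ℂ φ (ι z)).toLinearMap) *
        LinearMap.det ((fderiv ℂ ι z).toLinearMap) = 1 := by
  have h1 : (fun z => φ (ι z)) =ᶠ[𝓝 0] fun z => z := h.2.2.2.2.2
  filter_upwards [det_fderiv_comp h.1 h.2.1 h.2.2.2.1, det_fderiv_congr h1] with z h2 h3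
  rw [← h2, h3, fderiv_fun_id]
  simp

theorem analyticAt_det_fderiv {φ : (Fin n → ℂ) → (Fin n → ℂ)} (hφ : AnalyticAt ℂ φ 0) :
    AnalyticAt ℂ (fun z => LinearMap.det ((fderiv ℂ φ z).toLinearMap)) 0 := by
  have h1 : ∀ i j, AnalyticAt ℂ (fun z => fderiv ℂ φ z (Pi.single j 1) i) 0 := by
    intro i j
    have h2 : AnalyticAt ℂ (fun z => fderiv ℂ φ z (Pi.single j 1)) 0 :=
      ((ContinuousLinearMap.apply ℂ (Fin n → ℂ) (Pi.single j 1 : Fin n → ℂ)).analyticAt _).fun_comp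
        hφ.fderiv
    exact (analyticAt_pi_iff.1 h2) i
  simp only [← LinearMap.det_toMatrix', Matrix.det_apply]
  refine Finset.analyticAt_fun_sum _ fun π _ => ?_
  simp only [zsmul_eq_mul, Units.smul_def]
  refine analyticAt_const.mul (Finset.analyticAt_fun_prod _ fun i _ => ?_)
  simpa [LinearMap.toMatrix'_apply] using h1 (π i) i

/-- Hadamard's lemma: a germ vanishing on `{z_j = 0}` is divisible by `z_j`. -/
theorem hadamard_division {h : (Fin n → ℂ) → ℂ} (hh : AnalyticAt ℂ h 0) (j : Fin n)
    (h0 : ∀ᶠ z in 𝓝 (0 : Fin n → ℂ), h (Function.update z j 0) = 0) :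
    ∃ u, AnalyticAt ℂ u 0 ∧ ∀ᶠ z in 𝓝 (0 : Fin n → ℂ), h z = z j * u z := by
  let R : ℝ → (Fin n → ℂ) →L[ℂ] (Fin n → ℂ) := fun t =>
    ContinuousLinearMap.pi fun i => (if i = j then (t : ℂ) else 1) • ContinuousLinearMap.proj i
  have hRapp : ∀ t z i, R t z i = (if i = j then (t : ℂ) else 1) * z i := fun t z i => rfl
  have hR : Continuous R := by
    rw [continuous_clm_apply]
    intro y
    refine continuous_pi fun i => ?_
    simp only [hRapp]
    split_ifs <;> fun_prop
  have hRn : ∀ t ∈ Set.uIcc (0 : ℝ) 1, ∀ z, ‖R t z‖ ≤ ‖z‖ := by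
    intro t ht z
    rw [Set.uIcc_of_le zero_le_one] at ht
    refine (pi_norm_le_iff_of_nonneg (norm_nonneg _)).2 fun i => ?_
    rw [hRapp, norm_mul]
    refine (mul_le_of_le_one_left (norm_nonneg _) ?_).trans (norm_le_pi_norm z i)
    split_ifs
    · simpa [abs_of_nonneg ht.1] using ht.2
    · simp
  have hd : AnalyticAt ℂ (fun z => fderiv ℂ h z (Pi.single j 1)) 0 :=
    ((ContinuousLinearMap.apply ℂ ℂ (Pi.single j 1 : Fin n → ℂ)).analyticAt _).fun_comp hh.fderiv
  refine ⟨fun z => ∫ t in (0:ℝ)..1, 1 * fderiv ℂ h (R t z) (Pi.single j 1),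
    analyticAt_paramIntegral hR (fun t ht => ?_) continuous_const hd, ?_⟩
  · refine ContinuousLinearMap.opNorm_le_bound _ zero_le_one fun z => ?_
    rw [one_mul]
    exact hRn t (Set.uIoc_subset_uIcc ht) z
  obtain ⟨r, hr, hr'⟩ := Metric.eventually_nhds_iff_ball.1
    (h0.and (hh.eventually_analyticAt.and hd.eventually_analyticAt))
  refine Metric.eventually_nhds_iff_ball.2 ⟨r, hr, fun z hz => ?_⟩
  have hmem : ∀ t ∈ Set.uIcc (0 : ℝ) 1, R t z ∈ Metric.ball 0 r := by
    intro t ht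
    rw [mem_ball_zero_iff] at hz ⊢
    exact (hRn t ht z).trans_lt hz
  have hcont : ContinuousOn (fun t : ℝ => z j * fderiv ℂ h (R t z) (Pi.single j 1))
      (Set.uIcc 0 1) := by
    refine continuousOn_const.mul fun t ht => ContinuousAt.continuousWithinAt ?_
    exact ContinuousAt.comp' (f := fun t => R t z)
      (g := fun z => fderiv ℂ h z (Pi.single j 1)) (hr' _ (hmem t ht)).2.2.continuousAt
      (hR.clm_apply continuous_const).continuousAt
  have hder : ∀ t ∈ Set.uIcc (0 : ℝ) 1, HasDerivAt (fun t : ℝ => h (R t z))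
      (z j * fderiv ℂ h (R t z) (Pi.single j 1)) t := by
    intro t ht
    have h1 : HasDerivAt (fun t : ℝ => R t z) (z j • Pi.single j (1 : ℂ)) t := by
      rw [hasDerivAt_pi]
      intro i
      simp only [hRapp]
      by_cases hij : i = j
      · subst hij
        simpa using (Complex.ofRealCLM.hasDerivAt (x := t)).mul_const (z i)
      · simpa [hij] using hasDerivAt_const t (z i)
    have h2 := hasDerivAt_comp_curve (hr' _ (hmem t ht)).2.1.differentiableAt h1
    rwa [map_smul, smul_eq_mul] at h2
  have := intervalIntegral.integral_eq_sub_of_hasDerivAt hder hcont.intervalIntegrable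
  rw [intervalIntegral.integral_const_mul] at this
  have hR0 : R 0 z = Function.update z j 0 := by
    ext i
    by_cases hij : i = j
    · subst hij; simp [hRapp]
    · simp [hRapp, hij]
  have hR1 : R 1 z = z := by
    ext i
    simp [hRapp]
  rw [hR0, hR1, (hr' z hz).1, sub_zero] at this
  simpa using this.symm

end Biholo

/-! ### Circle actions, averages and primitives along linear fields -/

section Torus
variable {n : ℕ}

/-- The diagonal map `z ↦ (e^{c_i} z_i)_i`. -/
noncomputable def torus (c : Fin n → ℂ) : (Fin n → ℂ) →L[ℂ] (Fin n → ℂ) :=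
  ContinuousLinearMap.pi fun i => Complex.exp (c i) • ContinuousLinearMap.proj i

theorem torus_apply (c z : Fin n → ℂ) (i : Fin n) : torus c z i = Complex.exp (c i) * z i := rfl

theorem torus_add (a b z : Fin n → ℂ) : torus (a + b) z = torus a (torus b z) := by
  ext i
  simp [torus_apply, Complex.exp_add, mul_assoc]

theorem torus_zero (z : Fin n → ℂ) : torus 0 z = z := by
  ext i
  simp [torus_apply]

theorem prod_torus {c : Fin n → ℂ} (hc : ∑ i, c i = 0) (z : Fin n → ℂ) :
    ∏ i, torus c z i = ∏ i, z i := by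
  simp [torus_apply, Finset.prod_mul_distrib, ← Complex.exp_sum, hc]

/-- The value at `z` of the linear vector field `∑ d_i z_i ∂/∂z_i`. -/
def eulerField (d : Fin n → ℤ) (z : Fin n → ℂ) : Fin n → ℂ := fun i => d i * z i

/-- The derivative of `G` along the vector field `∑ d_i z_i ∂/∂z_i`. -/
noncomputable def eulerDeriv (d : Fin n → ℤ) (G : (Fin n → ℂ) → ℂ) (z : Fin n → ℂ) : ℂ :=
  fderiv ℂ G z (eulerField d z)

/-- The circle action with weights `d`: `z ↦ (e^{iθ d_i} z_i)_i`. -/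
noncomputable def rot (d : Fin n → ℤ) (θ : ℝ) : (Fin n → ℂ) →L[ℂ] (Fin n → ℂ) :=
  torus fun i => θ * Complex.I * d i

theorem norm_rot (d : Fin n → ℤ) (θ : ℝ) (z : Fin n → ℂ) : ‖rot d θ z‖ = ‖z‖ := by
  have h : ∀ i, ‖rot d θ z i‖ = ‖z i‖ := by
    intro i
    rw [rot, torus_apply, norm_mul]
    have : (θ : ℂ) * Complex.I * d i = ((θ * d i : ℝ) : ℂ) * Complex.I := by push_cast; ring
    rw [this, Complex.norm_exp_ofReal_mul_I, one_mul]
  refine le_antisymm ?_ ?_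
  · exact (pi_norm_le_iff_of_nonneg (norm_nonneg _)).2 fun i => (h i).le.trans (norm_le_pi_norm z i)
  · exact (pi_norm_le_iff_of_nonneg (norm_nonneg _)).2 fun i =>
      (h i).ge.trans (norm_le_pi_norm (rot d θ z) i)

theorem rot_mem_ball {d : Fin n → ℤ} {θ : ℝ} {z : Fin n → ℂ} {r : ℝ}
    (hz : z ∈ Metric.ball (0 : Fin n → ℂ) r) : rot d θ z ∈ Metric.ball (0 : Fin n → ℂ) r := by
  rw [mem_ball_zero_iff] at hz ⊢
  rwa [norm_rot]

theorem eventually_rot {P : (Fin n → ℂ) → Prop} (h : ∀ᶠ z in 𝓝 (0 : Fin n → ℂ), P z)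
    (d : Fin n → ℤ) : ∀ᶠ z in 𝓝 (0 : Fin n → ℂ), ∀ θ, P (rot d θ z) := by
  obtain ⟨r, hr, h⟩ := Metric.eventually_nhds_iff_ball.1 h
  exact Metric.eventually_nhds_iff_ball.2 ⟨r, hr, fun z hz θ => h _ (rot_mem_ball hz)⟩

theorem rot_add (d : Fin n → ℤ) (a b : ℝ) (z : Fin n → ℂ) :
    rot d (a + b) z = rot d a (rot d b z) := by
  rw [rot, rot, rot, ← torus_add]
  congr 2
  ext i
  simp
  ring

theorem rot_zero (d : Fin n → ℤ) (z : Fin n → ℂ) : rot d 0 z = z := by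
  ext i
  simp [rot, torus_apply]

theorem rot_comm (d e : Fin n → ℤ) (a b : ℝ) (z : Fin n → ℂ) :
    rot d a (rot e b z) = rot e b (rot d a z) := by
  rw [rot, rot, ← torus_add, ← torus_add, add_comm]

theorem prod_rot {d : Fin n → ℤ} (hd : ∑ i, d i = 0) (θ : ℝ) (z : Fin n → ℂ) :
    ∏ i, rot d θ z i = ∏ i, z i := by
  refine prod_torus ?_ z
  rw [← Finset.mul_sum]
  have : (∑ i, (d i : ℂ)) = 0 := by exact_mod_cast hd
  rw [this, mul_zero]

theorem rot_two_pi (d : Fin n → ℤ) (θ : ℝ) (z : Fin n → ℂ) :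
    rot d (θ + 2 * Real.pi) z = rot d θ z := by
  rw [rot_add]
  congr 1
  ext i
  have : ((2 * Real.pi : ℝ) : ℂ) * Complex.I * d i = d i * (2 * Real.pi * Complex.I) := by
    push_cast; ring
  rw [rot, torus_apply, this, Complex.exp_int_mul_two_pi_mul_I, one_mul]

theorem hasDerivAt_rot (d : Fin n → ℤ) (θ : ℝ) (z : Fin n → ℂ) :
    HasDerivAt (fun t : ℝ => rot d t z) (Complex.I • eulerField d (rot d θ z)) θ := by
  rw [hasDerivAt_pi]
  intro i
  simp only [rot, torus_apply]
  have h1 : HasDerivAt (fun t : ℝ => (t : ℂ) * Complex.I * d i) (1 * Complex.I * d i) θ :=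
    ((Complex.ofRealCLM.hasDerivAt (x := θ)).mul_const _).mul_const _
  refine (h1.cexp.mul_const (z i)).congr_deriv ?_
  simp [eulerField, torus_apply]
  ring

theorem continuous_rot (d : Fin n → ℤ) : Continuous (rot d) := by
  rw [continuous_clm_apply]
  exact fun z => continuous_iff_continuousAt.2 fun θ => (hasDerivAt_rot d θ z).continuousAt

theorem hasDerivAt_comp_rot {G : (Fin n → ℂ) → ℂ} {d : Fin n → ℤ} {θ : ℝ} {z : Fin n → ℂ}
    (hG : AnalyticAt ℂ G (rot d θ z)) :
    HasDerivAt (fun t => G (rot d t z)) (Complex.I * eulerDeriv d G (rot d θ z)) θ := by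
  have := hasDerivAt_comp_curve hG.differentiableAt (hasDerivAt_rot d θ z)
  rwa [map_smul, smul_eq_mul] at this

/-- `G` is (near the origin) invariant under the circle action with weights `d`. -/
def RotInv (d : Fin n → ℤ) (G : (Fin n → ℂ) → ℂ) : Prop :=
  ∀ᶠ z in 𝓝 (0 : Fin n → ℂ), ∀ θ, G (rot d θ z) = G z

/-- The average of `G` over the circle action with weights `d`. -/
noncomputable def avg (d : Fin n → ℤ) (G : (Fin n → ℂ) → ℂ) (z : Fin n → ℂ) : ℂ :=
  (2 * Real.pi : ℂ)⁻¹ * ∫ θ in (0 : ℝ)..(2 * Real.pi), G (rot d θ z)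

/-- A primitive of `G - avg d G` along the vector field `∑ d_i z_i ∂/∂z_i`. -/
noncomputable def eulerPrim (d : Fin n → ℤ) (G : (Fin n → ℂ) → ℂ) (z : Fin n → ℂ) : ℂ :=
  Complex.I * (2 * Real.pi : ℂ)⁻¹ * ∫ θ in (0 : ℝ)..(2 * Real.pi), (θ : ℂ) * G (rot d θ z)

theorem norm_rot_le (d : Fin n → ℤ) (θ : ℝ) : ‖rot d θ‖ ≤ 1 :=
  ContinuousLinearMap.opNorm_le_bound _ zero_le_one fun z => by rw [norm_rot, one_mul]

theorem analyticAt_avg {d : Fin n → ℤ} {G : (Fin n → ℂ) → ℂ} (hG : AnalyticAt ℂ G 0) :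
    AnalyticAt ℂ (avg d G) 0 := by
  have := analyticAt_paramIntegral (a := 0) (b := 2 * Real.pi) (continuous_rot d)
    (fun θ _ => norm_rot_le d θ) (w := fun _ => 1) continuous_const hG
  simp only [one_mul] at this
  exact analyticAt_const.mul this

theorem analyticAt_eulerPrim {d : Fin n → ℤ} {G : (Fin n → ℂ) → ℂ} (hG : AnalyticAt ℂ G 0) :
    AnalyticAt ℂ (eulerPrim d G) 0 :=
  analyticAt_const.mul (analyticAt_paramIntegral (continuous_rot d)
    (fun θ _ => norm_rot_le d θ) Complex.continuous_ofReal hG)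

theorem analyticAt_coord (i : Fin n) : AnalyticAt ℂ (fun z : Fin n → ℂ => z i) 0 :=
  (ContinuousLinearMap.proj (R := ℂ) (φ := fun _ : Fin n => ℂ) i).analyticAt 0

theorem analyticAt_eulerDeriv {d : Fin n → ℤ} {G : (Fin n → ℂ) → ℂ} (hG : AnalyticAt ℂ G 0) :
    AnalyticAt ℂ (eulerDeriv d G) 0 := by
  have h1 : AnalyticAt ℂ (fun z : Fin n → ℂ => eulerField d z) 0 := by
    refine analyticAt_pi_iff.2 fun i => ?_
    exact analyticAt_const.mul (analyticAt_coord i)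
  exact ((ContinuousLinearMap.id ℂ ((Fin n → ℂ) →L[ℂ] ℂ)).analyticAt_bilinear
    (fderiv ℂ G 0, eulerField d 0)).comp₂ hG.fderiv h1

theorem two_pi_ne : (2 * Real.pi : ℂ) ≠ 0 := by
  simp [Real.pi_ne_zero]

theorem avg_rot (d : Fin n → ℤ) (G : (Fin n → ℂ) → ℂ) (τ : ℝ) (z : Fin n → ℂ) :
    avg d G (rot d τ z) = avg d G z := by
  have hper : Function.Periodic (fun θ => G (rot d θ z)) (2 * Real.pi) := fun θ => by
    simp only [rot_two_pi]
  simp only [avg, ← rot_add]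
  rw [intervalIntegral.integral_comp_add_right (fun θ => G (rot d θ z))]
  have := hper.intervalIntegral_add_eq τ 0
  rw [zero_add] at this ⊢
  rw [add_comm (2 * Real.pi) τ, this]

theorem rotInv_avg_self (d : Fin n → ℤ) (G : (Fin n → ℂ) → ℂ) : RotInv d (avg d G) :=
  Eventually.of_forall fun z θ => avg_rot d G θ z

theorem RotInv.avg {d e : Fin n → ℤ} {G : (Fin n → ℂ) → ℂ} (h : RotInv e G) :
    RotInv e (avg d G) := by
  filter_upwards [eventually_rot h d] with z hz θ
  simp only [_root_.avg]
  congr 1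
  refine intervalIntegral.integral_congr fun t _ => ?_
  simp only [rot_comm d e, hz]

theorem RotInv.avg_eq {d : Fin n → ℤ} {G : (Fin n → ℂ) → ℂ} (h : RotInv d G) :
    ∀ᶠ z in 𝓝 (0 : Fin n → ℂ), _root_.avg d G z = G z := by
  filter_upwards [h] with z hz
  simp only [_root_.avg, hz, intervalIntegral.integral_const, sub_zero]
  have := two_pi_ne
  rw [Complex.real_smul]
  push_cast
  field_simp

theorem RotInv.eulerDeriv {d : Fin n → ℤ} {G : (Fin n → ℂ) → ℂ} (h : RotInv d G)
    (hG : AnalyticAt ℂ G 0) : ∀ᶠ z in 𝓝 (0 : Fin n → ℂ), _root_.eulerDeriv d G z = 0 := by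
  filter_upwards [h, hG.eventually_analyticAt] with z hz hz'
  have h1 := hasDerivAt_comp_rot (d := d) (θ := 0) (z := z) (G := G) (by rwa [rot_zero])
  simp only [hz, rot_zero] at h1
  have h2 := h1.unique (hasDerivAt_const _ _)
  simpa using h2

theorem avg_congr {d : Fin n → ℤ} {G H : (Fin n → ℂ) → ℂ}
    (h : ∀ᶠ z in 𝓝 (0 : Fin n → ℂ), G z = H z) :
    ∀ᶠ z in 𝓝 (0 : Fin n → ℂ), avg d G z = avg d H z := by
  filter_upwards [eventually_rot h d] with z hz
  simp only [avg, hz]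

theorem avg_mul_of_rotInv {d : Fin n → ℤ} {G H : (Fin n → ℂ) → ℂ} (hH : RotInv d H) :
    ∀ᶠ z in 𝓝 (0 : Fin n → ℂ), avg d (fun y => G y * H y) z = avg d G z * H z := by
  filter_upwards [hH] with z hz
  simp only [avg, hz, intervalIntegral.integral_mul_const, mul_assoc]

theorem continuous_comp_rot {G : (Fin n → ℂ) → ℂ} (hG : AnalyticAt ℂ G 0) (d : Fin n → ℤ) :
    ∀ᶠ z in 𝓝 (0 : Fin n → ℂ), Continuous fun θ => G (rot d θ z) := by
  filter_upwards [eventually_rot hG.eventually_analyticAt d] with z hz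
  exact continuous_iff_continuousAt.2 fun θ => (hasDerivAt_comp_rot (hz θ)).continuousAt

theorem avg_sum {ι : Type*} (s : Finset ι) {d : Fin n → ℤ} {G : ι → (Fin n → ℂ) → ℂ}
    (hG : ∀ i, AnalyticAt ℂ (G i) 0) :
    ∀ᶠ z in 𝓝 (0 : Fin n → ℂ), avg d (fun y => ∑ i ∈ s, G i y) z = ∑ i ∈ s, avg d (G i) z := by
  have := (Filter.eventually_all_finset s).2 fun i _ => continuous_comp_rot (hG i) d
  filter_upwards [this] with z hz
  simp only [avg]
  rw [intervalIntegral.integral_finsetSum, Finset.mul_sum]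
  exact fun i hi => (hz i hi).intervalIntegrable _ _

/-- A derivative along the generating field has zero average over a circle action. -/
theorem avg_eulerDeriv {d : Fin n → ℤ} {G : (Fin n → ℂ) → ℂ} (hG : AnalyticAt ℂ G 0) :
    ∀ᶠ z in 𝓝 (0 : Fin n → ℂ), avg d (eulerDeriv d G) z = 0 := by
  filter_upwards [eventually_rot hG.eventually_analyticAt d,
    continuous_comp_rot (analyticAt_eulerDeriv (d := d) hG) d] with z hz hz'
  have h1 := intervalIntegral.integral_eq_sub_of_hasDerivAt (a := 0) (b := 2 * Real.pi)
    (fun θ _ => hasDerivAt_comp_rot (hz θ)) ((continuous_const.mul hz').intervalIntegrable _ _)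
  have h2 := rot_two_pi d 0 z
  rw [zero_add] at h2
  rw [h2, sub_self, intervalIntegral.integral_const_mul] at h1
  have h3 := (mul_eq_zero.1 h1).resolve_left Complex.I_ne_zero
  rw [avg, h3, mul_zero]

theorem avg_comm {d e : Fin n → ℤ} {G : (Fin n → ℂ) → ℂ} (hG : AnalyticAt ℂ G 0) :
    ∀ᶠ z in 𝓝 (0 : Fin n → ℂ), avg d (avg e G) z = avg e (avg d G) z := by
  have h1 := eventually_rot (eventually_rot hG.eventually_analyticAt d) e
  filter_upwards [h1] with z hz
  simp only [avg, intervalIntegral.integral_const_mul]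
  rw [MeasureTheory.intervalIntegral_intervalIntegral_swap]
  · simp only [rot_comm e d]
  · have hc : Continuous (Function.uncurry fun a b : ℝ => G (rot e b (rot d a z))) := by
      rw [continuous_iff_continuousAt]
      rintro ⟨a, b⟩
      have h2 : ContinuousAt G (rot e b (rot d a z)) := by
        rw [rot_comm]
        exact (hz b a).continuousAt
      have h3 : Continuous fun p : ℝ × ℝ => rot e p.2 (rot d p.1 z) :=
        ((continuous_rot e).comp continuous_snd).clm_apply
          (((continuous_rot d).comp continuous_fst).clm_apply continuous_const)
      exact ContinuousAt.comp (f := fun p : ℝ × ℝ => rot e p.2 (rot d p.1 z)) (x := (a, b)) h2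
        h3.continuousAt
    refine (hc.continuousOn.integrableOn_compact
      ((isCompact_uIcc (a := (0 : ℝ)) (b := 2 * Real.pi)).prod
        (isCompact_uIcc (a := (0 : ℝ)) (b := 2 * Real.pi)))).mono_set ?_
    exact Set.prod_mono Set.uIoc_subset_uIcc Set.uIoc_subset_uIcc

/-- The average is the only obstruction to the existence of a primitive along the field. -/
theorem eulerDeriv_eulerPrim {d : Fin n → ℤ} {G : (Fin n → ℂ) → ℂ} (hG : AnalyticAt ℂ G 0) :
    ∀ᶠ z in 𝓝 (0 : Fin n → ℂ), eulerDeriv d (eulerPrim d G) z = G z - avg d G z := by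
  filter_upwards [continuous_comp_rot hG d,
    (analyticAt_eulerPrim (d := d) hG).eventually_analyticAt] with z hF hP
  set F : ℝ → ℂ := fun θ => G (rot d θ z) with hFdef
  have hper : Function.Periodic F (2 * Real.pi) := fun θ => by
    simp only [F, rot_two_pi]
  have hxF : Continuous fun x : ℝ => (x : ℂ) * F x := Complex.continuous_ofReal.mul hF
  set K : ℝ → ℂ := fun y => ∫ x in (0 : ℝ)..y, (x : ℂ) * F x with hK
  have hKd : ∀ y : ℝ, HasDerivAt K ((y : ℂ) * F y) y := fun y =>
    intervalIntegral.integral_hasDerivAt_right (hxF.intervalIntegrable _ _)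
      (hxF.stronglyMeasurableAtFilter _ _) hxF.continuousAt
  set M : ℂ := ∫ θ in (0 : ℝ)..(2 * Real.pi), F θ with hM
  -- the substitution `x = θ + τ` moves the parameter into the limits of integration
  have hshift : ∀ τ : ℝ, eulerPrim d G (rot d τ z) =
      Complex.I * (2 * Real.pi : ℂ)⁻¹ * (K (τ + 2 * Real.pi) - K τ - τ * M) := by
    intro τ
    have h1 : ∫ θ in (0 : ℝ)..(2 * Real.pi), (θ : ℂ) * G (rot d θ (rot d τ z)) =
        ∫ θ in (0 : ℝ)..(2 * Real.pi), (((θ + τ : ℝ) : ℂ) * F (θ + τ) - τ * F (θ + τ)) := by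
      refine intervalIntegral.integral_congr fun θ _ => ?_
      simp only [F, rot_add]
      push_cast
      ring
    have h2 : ∫ x in τ..(τ + 2 * Real.pi), (x : ℂ) * F x = K (τ + 2 * Real.pi) - K τ := by
      rw [eq_sub_iff_add_eq, add_comm]
      exact intervalIntegral.integral_add_adjacent_intervals (hxF.intervalIntegrable _ _)
        (hxF.intervalIntegrable _ _)
    have h3 := hper.intervalIntegral_add_eq τ 0
    rw [zero_add] at h3
    have hτF : Continuous fun x : ℝ => (τ : ℂ) * F x := continuous_const.mul hF
    rw [eulerPrim, h1,
      intervalIntegral.integral_comp_add_right (fun x => (x : ℂ) * F x - τ * F x), zero_add,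
      add_comm (2 * Real.pi) τ, intervalIntegral.integral_sub (hxF.intervalIntegrable _ _)
        (hτF.intervalIntegrable _ _), intervalIntegral.integral_const_mul,
      h2, h3]
  have hd1 := hasDerivAt_comp_rot (d := d) (θ := 0) (z := z) (G := eulerPrim d G)
    (by rwa [rot_zero])
  simp only [hshift, rot_zero] at hd1
  have hd2 : HasDerivAt (fun τ : ℝ => Complex.I * (2 * Real.pi : ℂ)⁻¹ *
      (K (τ + 2 * Real.pi) - K τ - τ * M)) (Complex.I * (2 * Real.pi : ℂ)⁻¹ *
      (((0 + 2 * Real.pi : ℝ) : ℂ) * F (0 + 2 * Real.pi) - ((0 : ℝ) : ℂ) * F 0 - 1 * M)) 0 := by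
    refine HasDerivAt.const_mul _ (((HasDerivAt.comp_add_const 0 (2 * Real.pi)
      (hKd _)).sub (hKd 0)).sub ?_)
    exact (Complex.ofRealCLM.hasDerivAt (x := (0 : ℝ))).mul_const M
  have h4 := hd1.unique hd2
  rw [mul_assoc] at h4
  have h5 := mul_left_cancel₀ Complex.I_ne_zero h4
  have h6 : F 0 = G z := by simp [F, rot_zero]
  rw [h5, hper, h6, avg, ← hM]
  have := two_pi_ne
  push_cast
  field_simp
  ring

end Torus

/-! ### Shears along linear fields -/

section Shear
variable {n : ℕ}

theorem det_torus (c : Fin n → ℂ) :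
    LinearMap.det (torus c).toLinearMap = Complex.exp (∑ i, c i) := by
  have h : (torus c).toLinearMap = Matrix.toLin' (Matrix.diagonal fun i => Complex.exp (c i)) := by
    ext z i
    simp [torus_apply, Matrix.mulVec_diagonal]
  rw [h, LinearMap.det_toLin', Matrix.det_diagonal, Complex.exp_sum]

/-- The map moving each point `z` along the flow of `∑ d_i z_i ∂/∂z_i` for the time `v z`. -/
noncomputable def shear (d : Fin n → ℤ) (v : (Fin n → ℂ) → ℂ) (z : Fin n → ℂ) : Fin n → ℂ :=
  torus (fun i => v z * d i) z

variable {d : Fin n → ℤ} {v : (Fin n → ℂ) → ℂ}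

theorem shear_apply (z : Fin n → ℂ) (i : Fin n) :
    shear d v z i = Complex.exp (v z * d i) * z i := rfl

theorem shear_zero : shear d v 0 = 0 := by simp [shear]

theorem prod_shear (hd : ∑ i, d i = 0) (z : Fin n → ℂ) : ∏ i, shear d v z i = ∏ i, z i := by
  refine prod_torus ?_ z
  rw [← Finset.mul_sum]
  have : (∑ i, (d i : ℂ)) = 0 := by exact_mod_cast hd
  rw [this, mul_zero]

theorem analyticAt_shear (hv : AnalyticAt ℂ v 0) : AnalyticAt ℂ (shear d v) 0 := by
  refine analyticAt_pi_iff.2 fun i => ?_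
  exact (AnalyticAt.cexp (hv.mul analyticAt_const)).mul (analyticAt_coord i)

theorem hasFDerivAt_shear {z : Fin n → ℂ} (hv : DifferentiableAt ℂ v z) :
    HasFDerivAt (shear d v) ((torus fun i => v z * d i) ∘L
      (ContinuousLinearMap.id ℂ _ + (fderiv ℂ v z).smulRight (eulerField d z))) z := by
  rw [hasFDerivAt_pi']
  intro i
  have h1 : HasFDerivAt (fun y => v y * d i) ((d i : ℂ) • fderiv ℂ v z) z :=
    hv.hasFDerivAt.mul_const _
  have h2 : HasFDerivAt (fun y : Fin n → ℂ => y i) (ContinuousLinearMap.proj i) z :=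
    (ContinuousLinearMap.proj (R := ℂ) (φ := fun _ : Fin n => ℂ) i).hasFDerivAt
  have h3 := h1.cexp.mul h2
  refine h3.congr_fderiv ?_
  ext y
  simp [torus_apply, eulerField]
  ring

theorem det_shear (hd : ∑ i, d i = 0) {z : Fin n → ℂ} (hv : DifferentiableAt ℂ v z) :
    LinearMap.det (fderiv ℂ (shear d v) z).toLinearMap = 1 + eulerDeriv d v z := by
  rw [(hasFDerivAt_shear hv).fderiv, ContinuousLinearMap.toLinearMap_comp, LinearMap.det_comp, det_torus,
    ← Finset.mul_sum]
  have : (∑ i, (d i : ℂ)) = 0 := by exact_mod_cast hd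
  rw [this, mul_zero, Complex.exp_zero, one_mul]
  have h : (ContinuousLinearMap.id ℂ (Fin n → ℂ) +
      (fderiv ℂ v z).smulRight (eulerField d z)).toLinearMap =
      LinearMap.transvection (fderiv ℂ v z).toLinearMap (eulerField d z) := by
    ext y
    simp [LinearMap.transvection.apply]
  rw [h, LinearMap.transvection.det]
  rfl

theorem fderiv_shear_eulerField {z : Fin n → ℂ} (hv : DifferentiableAt ℂ v z) :
    fderiv ℂ (shear d v) z (eulerField d z) =
      (1 + eulerDeriv d v z) • eulerField d (shear d v z) := by
  rw [(hasFDerivAt_shear hv).fderiv]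
  ext i
  simp [torus_apply, eulerField, shear_apply, eulerDeriv]
  ring

theorem eulerDeriv_zero (d : Fin n → ℤ) (G : (Fin n → ℂ) → ℂ) : eulerDeriv d G 0 = 0 := by
  have : eulerField d (0 : Fin n → ℂ) = 0 := by ext i; simp [eulerField]
  rw [eulerDeriv, this, map_zero]

theorem tendsto_shear (hv : AnalyticAt ℂ v 0) : Tendsto (shear d v) (𝓝 0) (𝓝 0) := by
  simpa [shear_zero] using (analyticAt_shear (d := d) hv).continuousAt.tendsto

theorem exists_isGermBiholo_shear (hd : ∑ i, d i = 0) (hv : AnalyticAt ℂ v 0) :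
    ∃ ι, IsGermBiholo (shear d v) ι := by
  refine isGermBiholo_of_det (analyticAt_shear hv) shear_zero ?_
  rw [det_shear hd hv.differentiableAt, eulerDeriv_zero]
  simp

/-- Invariance under the circle action extends to the complexified flow at bounded time,
hence to `shear`. -/
theorem RotInv.comp_shear {G : (Fin n → ℂ) → ℂ} (h : RotInv d G) (hG : AnalyticAt ℂ G 0)
    (hv : AnalyticAt ℂ v 0) :
    ∀ᶠ z in 𝓝 (0 : Fin n → ℂ), G (shear d v z) = G z := by
  obtain ⟨r, hr, hr'⟩ := Metric.eventually_nhds_iff_ball.1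
    (hG.eventually_analyticAt.and (h.eulerDeriv hG))
  -- the whole path `s ↦ shear d (s • v) z`, `s ∈ [0, 1]`, has to stay in the ball of radius `r`
  have hc : Continuous fun q : (ℂ × (Fin n → ℂ)) × ℝ =>
      torus (fun i => (q.2 : ℂ) * q.1.1 * d i) q.1.2 := by
    refine continuous_pi fun i => ?_
    simp only [torus_apply]
    fun_prop
  have hball : ∀ᶠ q in 𝓝 (v 0, (0 : Fin n → ℂ)), ∀ s ∈ Set.Icc (0 : ℝ) 1,
      torus (fun i => (s : ℂ) * q.1 * d i) q.2 ∈ Metric.ball (0 : Fin n → ℂ) r := by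
    refine isCompact_Icc.eventually_forall_of_forall_eventually fun s _ => ?_
    have h0 : torus (fun i => (s : ℂ) * v 0 * d i) (0 : Fin n → ℂ) ∈ Metric.ball 0 r := by
      rw [map_zero]
      exact Metric.mem_ball_self hr
    exact (hc.tendsto ((v 0, (0 : Fin n → ℂ)), s)).eventually (Metric.isOpen_ball.mem_nhds h0)
  have hz : Tendsto (fun z => (v z, z)) (𝓝 (0 : Fin n → ℂ)) (𝓝 (v 0, 0)) :=
    hv.continuousAt.tendsto.prodMk_nhds tendsto_id
  filter_upwards [hz.eventually hball] with z hz
  have hder : ∀ s ∈ Set.Icc (0 : ℝ) 1, HasDerivAt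
      (fun s : ℝ => G (torus (fun i => (s : ℂ) * v z * d i) z)) 0 s := by
    intro s hs
    have h1 : HasDerivAt (fun s : ℝ => torus (fun i => (s : ℂ) * v z * d i) z)
        (v z • eulerField d (torus (fun i => (s : ℂ) * v z * d i) z)) s := by
      rw [hasDerivAt_pi]
      intro i
      simp only [torus_apply]
      have h2 : HasDerivAt (fun s : ℝ => (s : ℂ) * v z * d i) (1 * v z * d i) s :=
        ((Complex.ofRealCLM.hasDerivAt (x := s)).mul_const _).mul_const _
      refine (h2.cexp.mul_const (z i)).congr_deriv ?_
      simp [eulerField, torus_apply]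
      ring
    refine (hasDerivAt_comp_curve (hr' _ (hz s hs)).1.differentiableAt h1).congr_deriv ?_
    have := (hr' _ (hz s hs)).2
    rw [_root_.eulerDeriv] at this
    rw [map_smul, this, smul_zero]
  have h3 := constant_of_has_deriv_right_zero (a := (0 : ℝ)) (b := 1)
    (fun s hs => (hder s hs).continuousAt.continuousWithinAt)
    (fun s hs => (hder s (Set.Ico_subset_Icc_self hs)).hasDerivWithinAt) 1 (by simp)
  have h4 : torus (0 : Fin n → ℂ) z = z := torus_zero z
  have h5 : (fun i : Fin n => ((0 : ℝ) : ℂ) * v z * d i) = 0 := by ext; simp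
  simp only [h5, h4, Complex.ofReal_one, one_mul] at h3
  exact h3

/-- Transport of a volume density by a shear changes it by a derivative along the field. -/
theorem shear_exact (hd : ∑ i, d i = 0) (hv : AnalyticAt ℂ v 0) {G : (Fin n → ℂ) → ℂ}
    (hG : AnalyticAt ℂ G 0) :
    ∃ K, AnalyticAt ℂ K 0 ∧ ∀ᶠ z in 𝓝 (0 : Fin n → ℂ),
      G (shear d v z) * LinearMap.det (fderiv ℂ (shear d v) z).toLinearMap - G z =
        eulerDeriv d K z := by
  have hA : AnalyticAt ℂ (avg d G) 0 := analyticAt_avg hG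
  have hH : AnalyticAt ℂ (eulerPrim d G) 0 := analyticAt_eulerPrim hG
  have hS := analyticAt_shear (d := d) hv
  have hHS : AnalyticAt ℂ (fun z => eulerPrim d G (shear d v z)) 0 :=
    AnalyticAt.fun_comp (by rw [shear_zero]; exact hH) hS
  refine ⟨fun z => avg d G z * v z + eulerPrim d G (shear d v z) - eulerPrim d G z,
    ((hA.mul hv).add hHS).sub hH, ?_⟩
  have hS0 := tendsto_shear (d := d) hv
  filter_upwards [hA.eventually_analyticAt, hH.eventually_analyticAt, hv.eventually_analyticAt,
    hS0.eventually hH.eventually_analyticAt, (rotInv_avg_self d G).eulerDeriv hA,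
    eulerDeriv_eulerPrim (d := d) hG, hS0.eventually (eulerDeriv_eulerPrim (d := d) hG),
    (rotInv_avg_self d G).comp_shear hA hv] with z zA zH zv zHS e1 e2 e3 e4
  have f1 := hasFDerivAt_shear (d := d) zv.differentiableAt
  have f2 := fderiv_shear_eulerField (d := d) zv.differentiableAt
  rw [f1.fderiv] at f2
  have f3 := ((zA.differentiableAt.hasFDerivAt.mul zv.differentiableAt.hasFDerivAt).add
    (zHS.differentiableAt.hasFDerivAt.comp z f1)).sub zH.differentiableAt.hasFDerivAt
  have f4 : eulerDeriv d (fun z => avg d G z * v z + eulerPrim d G (shear d v z) -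
      eulerPrim d G z) z = avg d G z * eulerDeriv d v z + v z * eulerDeriv d (avg d G) z +
      (1 + eulerDeriv d v z) * eulerDeriv d (eulerPrim d G) (shear d v z) -
      eulerDeriv d (eulerPrim d G) z := by
    have f5 : fderiv ℂ (fun z => avg d G z * v z + eulerPrim d G (shear d v z) -
      eulerPrim d G z) z = _ := HasFDerivAt.fderiv f3
    rw [eulerDeriv, f5]
    simp only [_root_.sub_apply, _root_.add_apply,
      _root_.smul_apply, smul_eq_mul]
    rw [ContinuousLinearMap.comp_apply, f2, map_smul]
    rfl
  rw [f4, e1, e2, e3, e4, det_shear hd zv.differentiableAt]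
  ring

theorem exists_log {E : Type*} [NormedAddCommGroup E] [NormedSpace ℂ E] {u : E → ℂ}
    (hu : AnalyticAt ℂ u 0) (h0 : u 0 ≠ 0) :
    ∃ w, AnalyticAt ℂ w 0 ∧ ∀ᶠ z in 𝓝 (0 : E), u z = Complex.exp (w z) := by
  refine ⟨fun z => Complex.log (u z / u 0) + Complex.log (u 0),
    ((hu.div analyticAt_const h0).clog ?_).add analyticAt_const, ?_⟩
  · simp [h0]
  · filter_upwards [hu.continuousAt.eventually_ne h0] with z hz
    rw [Complex.exp_add, Complex.exp_log (div_ne_zero hz h0), Complex.exp_log h0,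
      div_mul_cancel₀ _ h0]

end Shear

/-! ### Invariant densities and functions of the product of the coordinates -/

section Existence
variable {n : ℕ}

/-- The weights of the vector field `z_k ∂/∂z_k - z_N ∂/∂z_N`. -/
def dir (N k : Fin n) : Fin n → ℤ := Pi.single k 1 - Pi.single N 1

theorem sum_dir (N k : Fin n) : ∑ i, dir N k i = 0 := by
  simp [dir, Finset.sum_sub_distrib]

theorem avg_zero (d : Fin n → ℤ) (G : (Fin n → ℂ) → ℂ) : avg d G 0 = G 0 := by
  have := two_pi_ne
  simp only [avg, map_zero, intervalIntegral.integral_const, sub_zero, Complex.real_smul]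
  push_cast
  field_simp

/-- Moser step: the density `G` is pulled back from its average by a shear. -/
theorem moser_step {d : Fin n → ℤ} (hd : ∑ i, d i = 0) {G : (Fin n → ℂ) → ℂ}
    (hG : AnalyticAt ℂ G 0) (h0 : G 0 ≠ 0) :
    ∃ v, AnalyticAt ℂ v 0 ∧ ∀ᶠ z in 𝓝 (0 : Fin n → ℂ),
      LinearMap.det (fderiv ℂ (shear d v) z).toLinearMap * avg d G (shear d v z) = G z := by
  have hA : AnalyticAt ℂ (avg d G) 0 := analyticAt_avg hG
  have hA0 : avg d G 0 ≠ 0 := by rwa [avg_zero]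
  have hw : AnalyticAt ℂ (fun z => G z * (avg d G z)⁻¹) 0 := hG.mul (hA.inv hA0)
  have hv : AnalyticAt ℂ (eulerPrim d fun z => G z * (avg d G z)⁻¹) 0 := analyticAt_eulerPrim hw
  have hinv : RotInv d fun z => (avg d G z)⁻¹ :=
    (rotInv_avg_self d G).mono fun z hz θ => by simp only [hz]
  refine ⟨_, hv, ?_⟩
  filter_upwards [hv.eventually_analyticAt, eulerDeriv_eulerPrim (d := d) hw,
    avg_mul_of_rotInv (G := G) hinv, (rotInv_avg_self d G).comp_shear hA hv,
    hA.continuousAt.eventually_ne hA0] with z h1 h2 h3 h4 h5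
  rw [det_shear hd h1.differentiableAt, h2, h3, h4]
  field_simp
  ring

/-- Any nonvanishing density becomes invariant under prescribed circle actions after a change of
coordinates preserving the product of the coordinates. -/
theorem exists_invariant_density (N : Fin n) {g : (Fin n → ℂ) → ℂ} (hg : AnalyticAt ℂ g 0)
    (h0 : g 0 ≠ 0) (s : Finset (Fin n)) :
    ∃ χ χι, IsGermBiholo χ χι ∧ (∀ᶠ z in 𝓝 (0 : Fin n → ℂ), ∏ i, χ z i = ∏ i, z i) ∧
      ∃ G, AnalyticAt ℂ G 0 ∧ G 0 ≠ 0 ∧ (∀ k ∈ s, RotInv (dir N k) G) ∧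
        ∀ᶠ z in 𝓝 (0 : Fin n → ℂ),
          LinearMap.det (fderiv ℂ χ z).toLinearMap * G (χ z) = g z := by
  induction s using Finset.induction_on with
  | empty =>
    refine ⟨fun z => z, fun z => z, ⟨analyticAt_id, analyticAt_id, rfl, rfl,
      .of_forall fun _ => rfl, .of_forall fun _ => rfl⟩, .of_forall fun _ => rfl, g, hg, h0,
      by simp, .of_forall fun z => ?_⟩
    rw [fderiv_fun_id]
    simp
  | insert k s hk ih =>
    obtain ⟨χ, χι, hχ, hp, G, hG, hG0, hinv, hdet⟩ := ih
    obtain ⟨v, hv, hstep⟩ := moser_step (sum_dir N k) hG hG0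
    obtain ⟨ι, hι⟩ := exists_isGermBiholo_shear (sum_dir N k) hv
    refine ⟨_, _, hι.comp hχ, ?_, avg (dir N k) G, analyticAt_avg hG, by rwa [avg_zero], ?_, ?_⟩
    · filter_upwards [hp] with z hz
      rw [prod_shear (sum_dir N k), hz]
    · intro j hj
      rcases Finset.mem_insert.1 hj with rfl | hj
      · exact rotInv_avg_self _ _
      · exact (hinv j hj).avg
    · filter_upwards [hdet, hχ.tendsto.eventually hstep,
        det_fderiv_comp hι.1 hχ.1 hχ.2.2.1] with z h1 h2 h3
      rw [h3, ← h1, ← h2]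
      ring

theorem prod_germ_ne_zero : ¬ ∀ᶠ z in 𝓝 (0 : Fin n → ℂ), ∏ i, z i = 0 := by
  intro h
  obtain ⟨r, hr, h⟩ := Metric.eventually_nhds_iff_ball.1 h
  have h1 : (fun _ : Fin n => ((r / 2 : ℝ) : ℂ)) ∈ Metric.ball (0 : Fin n → ℂ) r := by
    rw [mem_ball_zero_iff, pi_norm_lt_iff hr]
    intro i
    rw [Complex.norm_real, Real.norm_of_nonneg (by positivity)]
    linarith
  have h2 := h _ h1
  rw [Finset.prod_const] at h2
  have h3 : ((r / 2 : ℝ) : ℂ) ≠ 0 := by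
    exact_mod_cast (by positivity : (r / 2) ≠ 0)
  exact pow_ne_zero _ h3 h2

theorem analyticAt_prod_coord (z : Fin n → ℂ) :
    AnalyticAt ℂ (fun z : Fin n → ℂ => ∏ i, z i) z :=
  Finset.analyticAt_fun_prod _ fun i _ =>
    (ContinuousLinearMap.proj (R := ℂ) (φ := fun _ : Fin n => ℂ) i).analyticAt z

theorem prod_zero_coord (N : Fin n) : ∏ i : Fin n, (0 : Fin n → ℂ) i = 0 :=
  Finset.prod_eq_zero (Finset.mem_univ N) rfl

theorem tendsto_prod_coord (N : Fin n) :
    Tendsto (fun z : Fin n → ℂ => ∏ i, z i) (𝓝 0) (𝓝 0) := by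
  have := (analyticAt_prod_coord (0 : Fin n → ℂ)).continuousAt.tendsto
  rwa [prod_zero_coord N] at this

theorem fderiv_weighted_eq_zero (N : Fin n) {G : (Fin n → ℂ) → ℂ} {z : Fin n → ℂ}
    (h : ∀ k, eulerDeriv (dir N k) G z = 0) {c : Fin n → ℂ} (hc : ∑ i, c i = 0) :
    fderiv ℂ G z (fun i => c i * z i) = 0 := by
  have h1 : (fun i => c i * z i) = ∑ k, c k • eulerField (dir N k) z := by
    ext i
    simp only [Finset.sum_apply, Pi.smul_apply, eulerField, dir, Pi.sub_apply, smul_eq_mul]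
    push_cast
    simp only [sub_mul, mul_sub, Finset.sum_sub_distrib, ← mul_assoc, ← Finset.sum_mul, hc]
    simp [Pi.single_apply]
  rw [h1, map_sum]
  refine Finset.sum_eq_zero fun k _ => ?_
  have := h k
  rw [eulerDeriv] at this
  rw [map_smul, this, smul_zero]

/-- A function killed by all fields `dir N k` takes the same value at two points of a polydisc
which are related by the torus of diagonal matrices of determinant one. -/
theorem torus_invariance (N : Fin n) {G : (Fin n → ℂ) → ℂ} {δ R : ℝ} (hδ : 0 ≤ δ) (hδR : δ < R)
    (hR : ∀ z ∈ Metric.ball (0 : Fin n → ℂ) R,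
      AnalyticAt ℂ G z ∧ ∀ k, eulerDeriv (dir N k) G z = 0)
    {b y : Fin n → ℂ} (hb : ∑ i, b i = 0) (hy : ‖y‖ ≤ δ) (hz : ‖torus b y‖ ≤ δ) :
    G (torus b y) = G y := by
  have hball : ∀ s ∈ Set.Icc (0 : ℝ) 1,
      torus (fun i => (s : ℂ) * b i) y ∈ Metric.ball (0 : Fin n → ℂ) R := by
    intro s hs
    rw [mem_ball_zero_iff]
    refine lt_of_le_of_lt ((pi_norm_le_iff_of_nonneg hδ).2 fun i => ?_) hδR
    have hyi := (norm_le_pi_norm y i).trans hy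
    have hzi := (norm_le_pi_norm (torus b y) i).trans hz
    rw [torus_apply, norm_mul, Complex.norm_exp] at hzi ⊢
    have hre : ((s : ℂ) * b i).re = s * (b i).re := by simp
    rw [hre]
    -- the exponential is monotone along the segment, so the larger endpoint dominates
    rcases le_total (b i).re 0 with h | h
    · refine le_trans (mul_le_of_le_one_left (norm_nonneg _) ?_) hyi
      exact Real.exp_le_one_iff.2 (mul_nonpos_of_nonneg_of_nonpos hs.1 h)
    · refine le_trans (mul_le_mul_of_nonneg_right ?_ (norm_nonneg _)) hzi
      exact Real.exp_le_exp.2 (mul_le_of_le_one_left h hs.2)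
  have hder : ∀ s ∈ Set.Icc (0 : ℝ) 1, HasDerivAt
      (fun s : ℝ => G (torus (fun i => (s : ℂ) * b i) y)) 0 s := by
    intro s hs
    have h1 : HasDerivAt (fun s : ℝ => torus (fun i => (s : ℂ) * b i) y)
        (fun i => b i * torus (fun i => (s : ℂ) * b i) y i) s := by
      rw [hasDerivAt_pi]
      intro i
      simp only [torus_apply]
      have h2 : HasDerivAt (fun s : ℝ => (s : ℂ) * b i) (1 * b i) s :=
        (Complex.ofRealCLM.hasDerivAt (x := s)).mul_const _
      refine (h2.cexp.mul_const (y i)).congr_deriv ?_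
      ring
    refine (hasDerivAt_comp_curve (hR _ (hball s hs)).1.differentiableAt h1).congr_deriv ?_
    exact fderiv_weighted_eq_zero N (hR _ (hball s hs)).2 hb
  have h3 := constant_of_has_deriv_right_zero (a := (0 : ℝ)) (b := 1)
    (fun s hs => (hder s hs).continuousAt.continuousWithinAt)
    (fun s hs => (hder s (Set.Ico_subset_Icc_self hs)).hasDerivWithinAt) 1 (by simp)
  have h4 : torus (0 : Fin n → ℂ) y = y := torus_zero y
  have h5 : (fun i : Fin n => ((0 : ℝ) : ℂ) * b i) = 0 := by ext; simp
  simp only [h5, h4, Complex.ofReal_one, one_mul] at h3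
  exact h3

/-- A slice of the fibration by the product of the coordinates: the point with product `t` all of
whose coordinates other than the `N`-th are `δ`. -/
noncomputable def slice (N : Fin n) (δ : ℝ) (t : ℂ) : Fin n → ℂ :=
  Function.update (fun _ => (δ : ℂ)) N (t / (δ : ℂ) ^ (n - 1))

theorem prod_slice (N : Fin n) {δ : ℝ} (hδ : δ ≠ 0) (t : ℂ) : ∏ i, slice N δ t i = t := by
  have : (δ : ℂ) ≠ 0 := by exact_mod_cast hδ
  rw [← Finset.mul_prod_erase _ _ (Finset.mem_univ N)]
  have h1 : ∏ i ∈ Finset.univ.erase N, slice N δ t i = (δ : ℂ) ^ (n - 1) := by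
    rw [Finset.prod_congr rfl (g := fun _ => (δ : ℂ)), Finset.prod_const,
      Finset.card_erase_of_mem (Finset.mem_univ N), Finset.card_fin]
    intro i hi
    simp [slice, Finset.ne_of_mem_erase hi]
  rw [h1]
  simp only [slice, Function.update_self]
  field_simp

theorem analyticAt_slice (N : Fin n) (δ : ℝ) (t : ℂ) : AnalyticAt ℂ (slice N δ) t := by
  refine analyticAt_pi_iff.2 fun i => ?_
  rcases eq_or_ne i N with rfl | hi
  · simp only [slice, Function.update_self]
    simp only [div_eq_mul_inv]
    exact analyticAt_id.mul analyticAt_const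
  · simp only [slice, Function.update_of_ne hi]
    exact analyticAt_const

/-- A germ invariant under all the circle actions `dir N k` is a function of the product of the
coordinates. That function is read off on a `slice`. -/
theorem exists_function_of_prod (N : Fin n) {G : (Fin n → ℂ) → ℂ} (hG : AnalyticAt ℂ G 0)
    (hinv : ∀ k, RotInv (dir N k) G) :
    ∃ a, AnalyticAt ℂ a 0 ∧ ∀ᶠ z in 𝓝 (0 : Fin n → ℂ), G z = a (∏ i, z i) := by
  obtain ⟨R, hR0, hR⟩ := Metric.eventually_nhds_iff_ball.1 (hG.eventually_analyticAt.and
    (eventually_all.2 fun k => (hinv k).eulerDeriv hG))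
  set δ : ℝ := R / 2 with hδdef
  have hδ : 0 < δ := by positivity
  have hδR : δ < R := by rw [hδdef]; linarith
  have hδc : (δ : ℂ) ≠ 0 := by exact_mod_cast hδ.ne'
  have hslice : ∀ t : ℂ, ‖t‖ ≤ δ ^ n → ‖slice N δ t‖ ≤ δ := by
    intro t ht
    refine (pi_norm_le_iff_of_nonneg hδ.le).2 fun i => ?_
    rcases eq_or_ne i N with rfl | hi
    · simp only [slice, Function.update_self]
      rw [norm_div, norm_pow, Complex.norm_real, Real.norm_of_nonneg hδ.le,
        div_le_iff₀ (by positivity), ← pow_succ', Nat.sub_add_cancel (Fin.pos i)]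
      exact ht
    · simp [slice, Function.update_of_ne hi, abs_of_pos hδ]
  have ha : AnalyticAt ℂ (fun t => G (slice N δ t)) 0 := by
    refine AnalyticAt.fun_comp (hR _ ?_).1 (analyticAt_slice N δ 0)
    rw [mem_ball_zero_iff]
    exact (hslice 0 (by rw [norm_zero]; positivity)).trans_lt hδR
  refine ⟨fun t => G (slice N δ t), ha, ?_⟩
  -- off the coordinate hyperplanes, `z` and `slice N δ (∏ z i)` lie on the same torus orbit
  have key : ∀ᶠ z in 𝓝 (0 : Fin n → ℂ), (∏ i, z i) * (G z - G (slice N δ (∏ i, z i))) = 0 := by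
    filter_upwards [Metric.ball_mem_nhds (0 : Fin n → ℂ) hδ] with z hz
    rw [mem_ball_zero_iff] at hz
    rcases eq_or_ne (∏ i, z i) 0 with h0 | h0
    · rw [h0, zero_mul]
    have hzi : ∀ i, z i ≠ 0 := fun i => Finset.prod_ne_zero_iff.1 h0 i (Finset.mem_univ i)
    have hpn : ‖∏ i, z i‖ ≤ δ ^ n := by
      rw [norm_prod]
      calc ∏ i, ‖z i‖ ≤ ∏ _i : Fin n, δ :=
            Finset.prod_le_prod (fun i _ => norm_nonneg _)
              fun i _ => (norm_le_pi_norm z i).trans hz.le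
        _ = δ ^ n := by simp
    set b : Fin n → ℂ := Function.update (fun i => Complex.log (z i / δ)) N
      (-∑ i ∈ Finset.univ.erase N, Complex.log (z i / δ)) with hb
    have hb1 : ∀ i ∈ Finset.univ.erase N, b i = Complex.log (z i / δ) := fun i hi => by
      rw [hb, Function.update_of_ne (Finset.ne_of_mem_erase hi)]
    have hbN : b N = -∑ i ∈ Finset.univ.erase N, Complex.log (z i / δ) := by
      rw [hb, Function.update_self]
    have hbsum : ∑ i, b i = 0 := by
      rw [← Finset.add_sum_erase _ _ (Finset.mem_univ N), Finset.sum_congr rfl hb1, hbN]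
      ring
    have hexp : ∀ i, Complex.exp (Complex.log (z i / δ)) = z i / δ := fun i =>
      Complex.exp_log (div_ne_zero (hzi i) hδc)
    have hbz : torus b (slice N δ (∏ i, z i)) = z := by
      ext i
      rw [torus_apply]
      rcases eq_or_ne i N with rfl | hi
      · rw [hbN, Complex.exp_neg, Complex.exp_sum, Finset.prod_congr rfl fun j _ => hexp j,
          Finset.prod_div_distrib, Finset.prod_const, Finset.card_erase_of_mem (Finset.mem_univ i),
          Finset.card_fin]
        simp only [slice, Function.update_self]
        rw [← Finset.mul_prod_erase _ _ (Finset.mem_univ i)] at h0 ⊢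
        have := right_ne_zero_of_mul h0
        field_simp
      · rw [hb1 i (by simp [hi]), hexp]
        simp only [slice, Function.update_of_ne hi]
        field_simp
    have := torus_invariance N hδ.le hδR hR hbsum (hslice _ hpn) (by rw [hbz]; exact hz.le)
    rw [hbz] at this
    rw [this, sub_self, mul_zero]
  have hap : AnalyticAt ℂ (fun z : Fin n → ℂ => G (slice N δ (∏ i, z i))) 0 :=
    AnalyticAt.fun_comp (g := fun t => G (slice N δ t)) (by rw [prod_zero_coord N]; exact ha)
      (analyticAt_prod_coord 0)
  rcases germ_mul_eq_zero (analyticAt_prod_coord 0) (hG.sub hap) key with h | h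
  · exact absurd h prod_germ_ne_zero
  · exact h.mono fun z hz => sub_eq_zero.1 hz

end Existence

/-! ### Rescaling of one coordinate and the normal form -/

section Scale
variable {n : ℕ}

theorem eulerDeriv_prod_coord (N : Fin n) (z : Fin n → ℂ) :
    fderiv ℂ (fun z : Fin n → ℂ => ∏ i, z i) z (Pi.single N (z N)) = ∏ i, z i := by
  have h1 : HasFDerivAt (fun z : Fin n → ℂ => ∏ i, z i)
      (∑ i, (∏ j ∈ Finset.univ.erase i, z j) •
        ContinuousLinearMap.proj (R := ℂ) (φ := fun _ : Fin n => ℂ) i) z :=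
    HasFDerivAt.finsetProd fun i _ =>
      (ContinuousLinearMap.proj (R := ℂ) (φ := fun _ : Fin n => ℂ) i).hasFDerivAt
  rw [h1.fderiv]
  simp [Pi.single_apply, Finset.prod_erase_mul]

/-- If rescaling the `N`-th coordinate by `u` turns the product `p` of the coordinates into
`lam p`, then the Jacobian determinant of the rescaling is `lam' p`. -/
theorem det_scale (N : Fin n) {u : (Fin n → ℂ) → ℂ} (hu : AnalyticAt ℂ u 0) {lam : ℂ → ℂ}
    (hl : AnalyticAt ℂ lam 0)
    (h : ∀ᶠ z in 𝓝 (0 : Fin n → ℂ), (∏ i, z i) * u z = lam (∏ i, z i)) :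
    ∀ᶠ z in 𝓝 (0 : Fin n → ℂ), LinearMap.det
      (fderiv ℂ (fun z : Fin n → ℂ => Function.update z N (z N * u z)) z).toLinearMap =
        deriv lam (∏ i, z i) := by
  have hdet : ∀ᶠ z in 𝓝 (0 : Fin n → ℂ), LinearMap.det
      (fderiv ℂ (fun z : Fin n → ℂ => Function.update z N (z N * u z)) z).toLinearMap =
        u z + fderiv ℂ u z (Pi.single N (z N)) := by
    filter_upwards [hu.eventually_analyticAt] with z hz
    have h1 : (fun z : Fin n → ℂ => Function.update z N (z N * u z)) =
        fun z => z + (z N * u z - z N) • (Pi.single N 1 : Fin n → ℂ) := by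
      ext y i
      rcases eq_or_ne i N with rfl | hi
      · simp
      · simp [hi]
    have hN : HasFDerivAt (fun z : Fin n → ℂ => z N)
        (ContinuousLinearMap.proj (R := ℂ) (φ := fun _ : Fin n => ℂ) N) z :=
      (ContinuousLinearMap.proj (R := ℂ) (φ := fun _ : Fin n => ℂ) N).hasFDerivAt
    have h2 := (hasFDerivAt_id z).add
      ((((hN.mul hz.differentiableAt.hasFDerivAt).sub hN)).smul_const
        (Pi.single N 1 : Fin n → ℂ))
    have h3 : fderiv ℂ (fun z => z + (z N * u z - z N) • (Pi.single N 1 : Fin n → ℂ)) z = _ :=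
      HasFDerivAt.fderiv h2
    have h4 : (ContinuousLinearMap.id ℂ (Fin n → ℂ) + (z N • fderiv ℂ u z + u z •
        ContinuousLinearMap.proj (R := ℂ) (φ := fun _ : Fin n => ℂ) N -
        ContinuousLinearMap.proj (R := ℂ) (φ := fun _ : Fin n => ℂ) N).smulRight
          (Pi.single N 1 : Fin n → ℂ)).toLinearMap =
        LinearMap.transvection (z N • fderiv ℂ u z + u z •
        ContinuousLinearMap.proj (R := ℂ) (φ := fun _ : Fin n => ℂ) N -
        ContinuousLinearMap.proj (R := ℂ) (φ := fun _ : Fin n => ℂ) N).toLinearMap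
          (Pi.single N 1 : Fin n → ℂ) := by
      refine LinearMap.ext fun y => ?_
      simp [LinearMap.transvection.apply]
    rw [h1, h3, h4, LinearMap.transvection.det]
    have h5 : (Pi.single N (z N) : Fin n → ℂ) = z N • Pi.single N 1 := by
      rw [← Pi.single_smul, smul_eq_mul, mul_one]
    rw [h5, map_smul]
    simp
    ring
  have ht := tendsto_prod_coord N
  have hlp : AnalyticAt ℂ (fun z : Fin n → ℂ => deriv lam (∏ i, z i)) 0 :=
    AnalyticAt.fun_comp (g := deriv lam) (by rw [prod_zero_coord N]; exact hl.deriv)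
      (analyticAt_prod_coord 0)
  have hT : AnalyticAt ℂ (fun z : Fin n → ℂ => Function.update z N (z N * u z)) 0 := by
    refine analyticAt_pi_iff.2 fun i => ?_
    rcases eq_or_ne i N with rfl | hi
    · simp only [Function.update_self]
      exact (analyticAt_coord i).mul hu
    · simpa [hi] using analyticAt_coord i
  have key : ∀ᶠ z in 𝓝 (0 : Fin n → ℂ), (∏ i, z i) * (LinearMap.det
      (fderiv ℂ (fun z : Fin n → ℂ => Function.update z N (z N * u z)) z).toLinearMap -
        deriv lam (∏ i, z i)) = 0 := by
    filter_upwards [hdet, h.eventually_nhds, hu.eventually_analyticAt,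
      ht.eventually hl.eventually_analyticAt] with z h1 h2 h3 h4
    have e1 := EventuallyEq.fderiv_eq (𝕜 := ℂ) h2
    have hp := (analyticAt_prod_coord z).differentiableAt.hasFDerivAt
    have e2 : fderiv ℂ (fun z : Fin n → ℂ => (∏ i, z i) * u z) z = _ :=
      (hp.mul h3.differentiableAt.hasFDerivAt).fderiv
    have e3 : fderiv ℂ (fun z : Fin n → ℂ => lam (∏ i, z i)) z = _ :=
      (h4.differentiableAt.hasDerivAt.comp_hasFDerivAt z hp).fderiv
    rw [e2, e3] at e1
    have e4 := congrArg (fun L => L (Pi.single N (z N) : Fin n → ℂ)) e1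
    simp only [_root_.add_apply, _root_.smul_apply, smul_eq_mul, eulerDeriv_prod_coord] at e4
    rw [h1]
    linear_combination e4
  rcases germ_mul_eq_zero (analyticAt_prod_coord 0) ((analyticAt_det_fderiv hT).sub hlp) key
    with h | h
  · exact absurd h prod_germ_ne_zero
  · exact h.mono fun z hz => sub_eq_zero.1 hz

theorem IsGermAuto.exists_inverse {lam : ℂ → ℂ} (h : IsGermAuto lam) :
    ∃ ψ, IsGermAuto ψ ∧ (∀ᶠ t in 𝓝 (0 : ℂ), ψ (lam t) = t) ∧
      ∀ᶠ t in 𝓝 (0 : ℂ), lam (ψ t) = t := by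
  obtain ⟨hl, h0, hd⟩ := h
  have hs : HasStrictDerivAt lam (deriv lam 0) 0 := hl.hasStrictDerivAt
  set ψ := hs.localInverse lam (deriv lam 0) 0 hd with hψdef
  have hψ : AnalyticAt ℂ ψ (lam 0) := hl.analyticAt_localInverse hd
  have h1 : ∀ᶠ t in 𝓝 (0 : ℂ), ψ (lam t) = t := HasStrictDerivAt.eventually_left_inverse ..
  have h2 : ∀ᶠ t in 𝓝 (lam 0), lam (ψ t) = t := HasStrictDerivAt.eventually_right_inverse ..
  have h4 : HasStrictDerivAt ψ (deriv lam 0)⁻¹ (lam 0) := hs.to_localInverse hd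
  have h3 := h1.self_of_nhds
  rw [h0] at hψ h2 h3 h4
  refine ⟨ψ, ⟨hψ, h3, ?_⟩, h1, h2⟩
  rw [h4.hasDerivAt.deriv]
  exact inv_ne_zero hd

theorem exists_primitive {a : ℂ → ℂ} (ha : AnalyticAt ℂ a 0) :
    ∃ lam, AnalyticAt ℂ lam 0 ∧ lam 0 = 0 ∧ ∀ᶠ t in 𝓝 (0 : ℂ), deriv lam t = a t := by
  obtain ⟨r, hr, h⟩ := analytic_ball ha
  obtain ⟨lam, h0, hl⟩ := h.differentiableOn.isExactOn_ball.with_val_at 0 0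
  refine ⟨lam, ?_, h0, ?_⟩
  · rw [Complex.analyticAt_iff_eventually_differentiableAt]
    filter_upwards [Metric.ball_mem_nhds 0 hr] with t ht using (hl t ht).differentiableAt
  · filter_upwards [Metric.ball_mem_nhds 0 hr] with t ht using (hl t ht).deriv

/-- The normal form of a nonvanishing volume density relative to the product of the coordinates. -/
theorem exists_normal_form (N : Fin n) {g : (Fin n → ℂ) → ℂ} (hg : AnalyticAt ℂ g 0)
    (h0 : g 0 ≠ 0) :
    ∃ χ χι, IsGermBiholo χ χι ∧ (∀ᶠ z in 𝓝 (0 : Fin n → ℂ),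
      LinearMap.det (fderiv ℂ χ z).toLinearMap = g z) ∧
      ∃ lam, IsGermAuto lam ∧ ∀ᶠ z in 𝓝 (0 : Fin n → ℂ), ∏ i, χ z i = lam (∏ i, z i) := by
  obtain ⟨χ, χι, hχ, hp, G, hG, hG0, hinv, hdet⟩ :=
    exists_invariant_density N hg h0 Finset.univ
  obtain ⟨a, ha, haG⟩ := exists_function_of_prod N hG fun k => hinv k (Finset.mem_univ k)
  obtain ⟨lam, hl, hl0, hla⟩ := exists_primitive ha
  have hμ : AnalyticAt ℂ (dslope lam 0) 0 := by
    obtain ⟨q, hq⟩ := hl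
    exact ⟨_, hq.has_fpower_series_dslope_fslope⟩
  have hlμ : ∀ t, t * dslope lam 0 t = lam t := fun t => by
    have := sub_smul_dslope lam 0 t
    rwa [sub_zero, hl0, sub_zero, smul_eq_mul] at this
  have hu : AnalyticAt ℂ (fun z : Fin n → ℂ => dslope lam 0 (∏ i, z i)) 0 :=
    AnalyticAt.fun_comp (by rw [prod_zero_coord N]; exact hμ) (analyticAt_prod_coord 0)
  have hT := det_scale N hu hl (.of_forall fun z => hlμ _)
  have hT' : AnalyticAt ℂ (fun z : Fin n → ℂ =>
      Function.update z N (z N * dslope lam 0 (∏ i, z i))) 0 := by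
    refine analyticAt_pi_iff.2 fun i => ?_
    rcases eq_or_ne i N with rfl | hi
    · simp only [Function.update_self]
      exact (analyticAt_coord i).mul hu
    · simpa [hi] using analyticAt_coord i
  have hl1 : deriv lam 0 ≠ 0 := by
    have h1 := hla.self_of_nhds
    have h2 := haG.self_of_nhds
    rw [prod_zero_coord N] at h2
    rwa [h1, ← h2]
  obtain ⟨Tι, hTι⟩ := isGermBiholo_of_det hT' (by ext i; simp [Function.update_apply]) (by
    have := hT.self_of_nhds
    rw [prod_zero_coord N] at this
    rwa [this])
  refine ⟨_, _, hTι.comp hχ, ?_, lam, ⟨hl, hl0, hl1⟩, ?_⟩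
  · filter_upwards [det_fderiv_comp hT' hχ.1 hχ.2.2.1, hχ.tendsto.eventually hT, hdet,
      hχ.tendsto.eventually haG,
      (hχ.tendsto.eventually ((tendsto_prod_coord N).eventually hla))] with z h1 h2 h3 h4 h5
    rw [h1, h2, h5, ← h4, ← h3, mul_comm]
  · filter_upwards [hp] with z hz
    rw [← hz, ← hlμ, Finset.prod_update_of_mem (Finset.mem_univ N),
      ← Finset.mul_prod_erase _ (fun i => χ z i) (Finset.mem_univ N), Finset.sdiff_singleton_eq_erase]
    ring

end Scale

/-! ### Jacobians of maps preserving the coordinate hyperplanes -/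

section Uniqueness
variable {n : ℕ}

/-- A function invariant under several circle actions which is a sum of functions each having
zero average along one of these actions vanishes. -/
theorem eq_zero_of_sum_avg_zero (N : Fin n) {B : (Fin n → ℂ) → ℂ}
    (s : Finset (Fin n)) (hinv : ∀ k ∈ s, RotInv (dir N k) B) {Δ : Fin n → (Fin n → ℂ) → ℂ}
    (hΔ : ∀ k, AnalyticAt ℂ (Δ k) 0)
    (hav : ∀ k ∈ s, ∀ᶠ z in 𝓝 (0 : Fin n → ℂ), avg (dir N k) (Δ k) z = 0)
    (h : ∀ᶠ z in 𝓝 (0 : Fin n → ℂ), B z = ∑ k ∈ s, Δ k z) :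
    ∀ᶠ z in 𝓝 (0 : Fin n → ℂ), B z = 0 := by
  induction s using Finset.induction_on generalizing Δ with
  | empty => simpa using h
  | insert k s hk ih =>
    refine ih (fun j hj => hinv j (Finset.mem_insert_of_mem hj))
      (Δ := fun j => avg (dir N k) (Δ j)) (fun j => analyticAt_avg (hΔ j)) ?_ ?_
    · intro j hj
      filter_upwards [avg_comm (d := dir N j) (e := dir N k) (hΔ j),
        avg_congr (d := dir N k) (H := fun _ => 0) (hav j (Finset.mem_insert_of_mem hj))]
        with z h1 h2
      rw [h1, h2]
      simp [avg]
    · filter_upwards [(hinv k (Finset.mem_insert_self k s)).avg_eq, avg_congr (d := dir N k) h,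
        avg_sum (insert k s) (d := dir N k) hΔ, hav k (Finset.mem_insert_self k s)]
        with z h1 h2 h3 h4
      rw [← h1, h2, h3, Finset.sum_insert hk, h4, zero_add]

/-- The map `z ↦ (z_i e^{v_i(z)})_i`, which preserves every coordinate hyperplane. -/
noncomputable def diagMap (v : Fin n → (Fin n → ℂ) → ℂ) (z : Fin n → ℂ) : Fin n → ℂ :=
  fun i => z i * Complex.exp (v i z)

theorem analyticAt_diagMap {v : Fin n → (Fin n → ℂ) → ℂ} (hv : ∀ i, AnalyticAt ℂ (v i) 0) :
    AnalyticAt ℂ (diagMap v) 0 := by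
  refine analyticAt_pi_iff.2 fun i => ?_
  exact (analyticAt_coord i).mul (hv i).cexp

/-- If `diagMap v` turns the product `p` of the coordinates into `lam p`, then its Jacobian
determinant equals `lam' p` up to derivatives along the fields tangent to the fibres of `p`. -/
theorem det_diagMap (N : Fin n) {lam : ℂ → ℂ} (hl : AnalyticAt ℂ lam 0) (s : Finset (Fin n))
    (hN : N ∉ s) {v : Fin n → (Fin n → ℂ) → ℂ} (hv : ∀ i, AnalyticAt ℂ (v i) 0)
    (hv0 : ∀ i ∉ s, i ≠ N → ∀ᶠ z in 𝓝 (0 : Fin n → ℂ), v i z = 0)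
    (hp : ∀ᶠ z in 𝓝 (0 : Fin n → ℂ), ∏ i, diagMap v z i = lam (∏ i, z i)) :
    ∃ K : Fin n → (Fin n → ℂ) → ℂ, (∀ k, AnalyticAt ℂ (K k) 0) ∧
      ∀ᶠ z in 𝓝 (0 : Fin n → ℂ), LinearMap.det (fderiv ℂ (diagMap v) z).toLinearMap =
        deriv lam (∏ i, z i) + ∑ k ∈ s, eulerDeriv (dir N k) (K k) z := by
  induction s using Finset.induction_on generalizing v with
  | empty =>
    refine ⟨fun _ _ => 0, fun _ => analyticAt_const, ?_⟩
    have h1 : ∀ᶠ z in 𝓝 (0 : Fin n → ℂ), ∀ i, i ≠ N → v i z = 0 := by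
      refine eventually_all.2 fun i => ?_
      rcases eq_or_ne i N with rfl | hi
      · exact .of_forall fun z h => absurd rfl h
      · exact (hv0 i (by simp) hi).mono fun z hz _ => hz
    have h2 : diagMap v =ᶠ[𝓝 0] fun z => Function.update z N (z N * Complex.exp (v N z)) := by
      filter_upwards [h1] with z hz
      ext i
      rcases eq_or_ne i N with rfl | hi
      · simp [diagMap]
      · simp [diagMap, hi, hz i hi]
    have h3 : ∀ᶠ z in 𝓝 (0 : Fin n → ℂ), (∏ i, z i) * Complex.exp (v N z) = lam (∏ i, z i) := by
      filter_upwards [hp, h2] with z hz h2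
      rw [← hz, h2, Finset.prod_update_of_mem (Finset.mem_univ N),
        ← Finset.mul_prod_erase _ (fun i => z i) (Finset.mem_univ N),
        Finset.sdiff_singleton_eq_erase]
      ring
    filter_upwards [det_fderiv_congr h2, 
      det_scale N (u := fun z => Complex.exp (v N z)) (hv N).cexp hl h3] with z e1 e2
    rw [e1, e2]
    simp
  | insert k s hk ih =>
    have hkN : k ≠ N := fun h => hN (h ▸ Finset.mem_insert_self k s)
    obtain ⟨ι, hι⟩ := exists_isGermBiholo_shear (sum_dir N k) (hv k)
    set S := shear (dir N k) (v k) with hS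
    set v' : Fin n → (Fin n → ℂ) → ℂ := fun i z => v i (ι z) - dir N k i * v k (ι z) with hv'
    have hvι : ∀ i, AnalyticAt ℂ (fun z => v i (ι z)) 0 := fun i =>
      AnalyticAt.fun_comp (by rw [hι.2.2.2.1]; exact hv i) hι.2.1
    have hv'a : ∀ i, AnalyticAt ℂ (v' i) 0 := fun i =>
      (hvι i).sub (analyticAt_const.mul (hvι k))
    have hcomp : diagMap v =ᶠ[𝓝 0] fun z => diagMap v' (S z) := by
      filter_upwards [hι.2.2.2.2.1] with z hz
      ext i
      simp only [diagMap, hv', hz]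
      rw [hS, shear_apply]
      rw [Complex.exp_sub, mul_comm (v k z)]
      have := Complex.exp_ne_zero (dir N k i * v k z)
      field_simp
    obtain ⟨K, hK, hKdet⟩ := ih (fun h => hN (Finset.mem_insert_of_mem h)) hv'a (by
        intro i hi hiN
        rcases eq_or_ne i k with rfl | hik
        · refine .of_forall fun z => ?_
          simp [hv', dir, hkN]
        · filter_upwards [hι.symm.tendsto.eventually (hv0 i (by simp [hi, hik]) hiN)] with z hz
          simp [hv', dir, hik, hiN, hz]) (by
        filter_upwards [hι.symm.tendsto.eventually hp, hι.symm.tendsto.eventually hcomp,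
          hι.2.2.2.2.2] with z h1 h2 h3
        rw [h2, h3] at h1
        rw [h1, ← prod_shear (sum_dir N k) (v := v k) (ι z), ← hS, h3])
    obtain ⟨L, hL, hLdet⟩ := shear_exact (sum_dir N k) (hv k)
      (analyticAt_det_fderiv (analyticAt_diagMap hv'a))
    refine ⟨Function.update K k L, fun j => ?_, ?_⟩
    · rcases eq_or_ne j k with rfl | hj
      · simpa using hL
      · simpa [hj] using hK j
    · filter_upwards [det_fderiv_congr hcomp,
        det_fderiv_comp (analyticAt_diagMap hv'a) hι.1 hι.2.2.1, hLdet, hKdet] with z h1 h2 h3 h4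
      rw [h1, h2, Finset.sum_insert hk, Function.update_self,
        Finset.sum_congr rfl (g := fun j => eulerDeriv (dir N j) (K j) z) (fun j hj => by
          rw [Function.update_of_ne (ne_of_mem_of_not_mem hj hk)])]
      linear_combination h3 + h4

theorem eq_linear_of_deriv {lam : ℂ → ℂ} (hl : AnalyticAt ℂ lam 0) (h0 : lam 0 = 0) {ε : ℂ}
    (h : ∀ᶠ t in 𝓝 (0 : ℂ), deriv lam t = ε) : ∀ᶠ t in 𝓝 (0 : ℂ), lam t = ε * t := by
  obtain ⟨r, hr, hr'⟩ := Metric.eventually_nhds_iff_ball.1 (h.and hl.eventually_analyticAt)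
  filter_upwards [Metric.ball_mem_nhds 0 hr] with t ht
  refine Metric.isOpen_ball.eqOn_of_deriv_eq (𝕜 := ℂ) (convex_ball (0 : ℂ) r).isPreconnected
    (g := fun t => ε * t)
    (fun x hx => (hr' x hx).2.differentiableAt.differentiableWithinAt) ?_ ?_
    (Metric.mem_ball_self hr) ?_ ht
  · exact (differentiable_id.const_mul ε).differentiableOn
  · intro x hx
    rw [(hr' x hx).1]
    simp
  · simp [h0]

/-- A property of `t` near `0` can be tested on the products of the coordinates near the origin. -/
theorem eventually_of_prod (N : Fin n) {P : ℂ → Prop}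
    (h : ∀ᶠ z in 𝓝 (0 : Fin n → ℂ), P (∏ i, z i)) : ∀ᶠ t in 𝓝 (0 : ℂ), P t := by
  obtain ⟨r, hr, h⟩ := Metric.eventually_nhds_iff_ball.1 h
  have h0 : slice N (r / 2) 0 ∈ Metric.ball (0 : Fin n → ℂ) r := by
    rw [mem_ball_zero_iff, pi_norm_lt_iff hr]
    intro i
    rcases eq_or_ne i N with rfl | hi
    · simp [slice, hr]
    · simp only [slice, Function.update_of_ne hi]
      rw [Complex.norm_real, Real.norm_of_nonneg (by positivity)]
      linarith
  filter_upwards [(analyticAt_slice N (r / 2) 0).continuousAt.preimage_mem_nhds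
    (Metric.isOpen_ball.mem_nhds h0)] with t ht
  have := h _ ht
  rwa [prod_slice N (by positivity)] at this

/-- A map `diagMap v` with constant Jacobian determinant `ε` can only turn the product of the
coordinates `p` into `ε p`. -/
theorem prod_factor (N : Fin n) {lam : ℂ → ℂ} (hl : AnalyticAt ℂ lam 0) (hl0 : lam 0 = 0)
    {v : Fin n → (Fin n → ℂ) → ℂ} (hv : ∀ i, AnalyticAt ℂ (v i) 0)
    (hp : ∀ᶠ z in 𝓝 (0 : Fin n → ℂ), ∏ i, diagMap v z i = lam (∏ i, z i)) {ε : ℂ}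
    (hdet : ∀ᶠ z in 𝓝 (0 : Fin n → ℂ),
      LinearMap.det (fderiv ℂ (diagMap v) z).toLinearMap = ε) :
    ∀ᶠ t in 𝓝 (0 : ℂ), lam t = ε * t := by
  obtain ⟨K, hK, hKdet⟩ := det_diagMap N hl (Finset.univ.erase N) (by simp) hv
    (fun i hi hiN => absurd (by simp [hiN]) hi) hp
  refine eq_linear_of_deriv hl hl0 (eventually_of_prod N ?_)
  have := eq_zero_of_sum_avg_zero N (B := fun z => ε - deriv lam (∏ i, z i))
    (Finset.univ.erase N)
    (fun k _ => .of_forall fun z θ => by simp only [prod_rot (sum_dir N k)])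
    (Δ := fun k => eulerDeriv (dir N k) (K k)) (fun k => analyticAt_eulerDeriv (hK k))
    (fun k _ => avg_eulerDeriv (hK k)) (by
      filter_upwards [hdet, hKdet] with z h1 h2
      linear_combination h2 - h1)
  exact this.mono fun z hz => (sub_eq_zero.1 hz).symm

end Uniqueness

/-! ### Permutations of the coordinate hyperplanes -/

section Permutation
variable {n : ℕ}

theorem det_permute_coord {χ : (Fin n → ℂ) → (Fin n → ℂ)} (hχ : AnalyticAt ℂ χ 0)
    (e : Equiv.Perm (Fin n)) :
    ∀ᶠ z in 𝓝 (0 : Fin n → ℂ),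
      LinearMap.det (fderiv ℂ (fun z j => χ z (e j)) z).toLinearMap =
        Equiv.Perm.sign e * LinearMap.det (fderiv ℂ χ z).toLinearMap := by
  filter_upwards [hχ.eventually_analyticAt] with z hz
  have h1 : HasFDerivAt (fun z j => χ z (e j)) (ContinuousLinearMap.pi fun j =>
      (ContinuousLinearMap.proj (R := ℂ) (φ := fun _ : Fin n => ℂ) (e j)) ∘L fderiv ℂ χ z) z := by
    rw [hasFDerivAt_pi]
    intro j
    exact (ContinuousLinearMap.proj (R := ℂ) (φ := fun _ : Fin n => ℂ) (e j)).hasFDerivAt.comp z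
      hz.differentiableAt.hasFDerivAt
  rw [h1.fderiv, ← LinearMap.det_toMatrix', ← LinearMap.det_toMatrix', ← Matrix.det_permute]
  congr 1

/-- A germ of biholomorphism compatible with the product of the coordinates permutes the
coordinate hyperplanes. -/
theorem exists_perm {χ : (Fin n → ℂ) → (Fin n → ℂ)} (hχ : AnalyticAt ℂ χ 0)
    (hdet : LinearMap.det (fderiv ℂ χ 0).toLinearMap ≠ 0) {lam : ℂ → ℂ} (hl0 : lam 0 = 0)
    (hp : ∀ᶠ z in 𝓝 (0 : Fin n → ℂ), ∏ i, χ z i = lam (∏ i, z i)) :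
    ∃ (e : Equiv.Perm (Fin n)) (v : Fin n → (Fin n → ℂ) → ℂ), (∀ i, AnalyticAt ℂ (v i) 0) ∧
      (fun z j => χ z (e j)) =ᶠ[𝓝 0] diagMap v := by
  have hχi : ∀ i, AnalyticAt ℂ (fun z => χ z i) 0 := fun i => analyticAt_pi_iff.1 hχ i
  have h1 : ∀ j : Fin n, ∃ i, ∀ᶠ z in 𝓝 (0 : Fin n → ℂ), χ (Function.update z j 0) i = 0 := by
    intro j
    have hu : AnalyticAt ℂ (fun z : Fin n → ℂ => Function.update z j 0) 0 := by
      refine analyticAt_pi_iff.2 fun i => ?_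
      rcases eq_or_ne i j with rfl | hi
      · simpa using analyticAt_const
      · simpa [hi] using analyticAt_coord i
    have hu0 : Function.update (0 : Fin n → ℂ) j 0 = 0 := by simp
    have hut : Tendsto (fun z : Fin n → ℂ => Function.update z j 0) (𝓝 0) (𝓝 0) := by
      simpa [hu0] using hu.continuousAt.tendsto
    obtain ⟨i, -, hi⟩ := germ_prod_eq_zero (G := fun i z => χ (Function.update z j 0) i)
      (fun i => AnalyticAt.fun_comp (g := fun z => χ z i) (by rw [hu0]; exact hχi i) hu)
      Finset.univ (by
        filter_upwards [hut.eventually hp] with z hz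
        rw [hz, Finset.prod_eq_zero (Finset.mem_univ j) (by simp), hl0])
    exact ⟨i, hi⟩
  choose π hπ using h1
  choose u hu hχu using fun j => hadamard_division (hχi (π j)) j (hπ j)
  have hsurj : Function.Surjective (fderiv ℂ χ 0) :=
    (LinearMap.equivOfDetNeZero _ hdet).surjective
  -- the row `π j` of the derivative at the origin is a multiple of the `j`-th coordinate form
  have hrow : ∀ j y, fderiv ℂ χ 0 y (π j) = u j 0 * y j := by
    intro j y
    have e1 : HasFDerivAt (fun z => χ z (π j))
        (ContinuousLinearMap.proj (R := ℂ) (φ := fun _ : Fin n => ℂ) (π j) ∘L fderiv ℂ χ 0) 0 :=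
      (ContinuousLinearMap.proj (R := ℂ) (φ := fun _ : Fin n => ℂ) (π j)).hasFDerivAt.comp 0
        hχ.differentiableAt.hasFDerivAt
    have hj : HasFDerivAt (fun z : Fin n → ℂ => z j)
        (ContinuousLinearMap.proj (R := ℂ) (φ := fun _ : Fin n => ℂ) j) 0 :=
      (ContinuousLinearMap.proj (R := ℂ) (φ := fun _ : Fin n => ℂ) j).hasFDerivAt
    have e2 := (hj.mul (hu j).differentiableAt.hasFDerivAt).congr_of_eventuallyEq (hχu j)
    have e3 := congrArg (fun L => L y) (e1.unique e2)
    simpa using e3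
  have hu0 : ∀ j, u j 0 ≠ 0 := by
    intro j h
    obtain ⟨y, hy⟩ := hsurj (Pi.single (π j) 1)
    have := hrow j y
    rw [hy, h] at this
    simp at this
  have hinj : Function.Injective π := by
    intro j m hjm
    by_contra hne
    have e1 := hrow j (Pi.single j 1)
    have e2 := hrow m (Pi.single j 1)
    rw [hjm, e2] at e1
    simp [Ne.symm hne] at e1
    exact hu0 j e1.symm
  choose v hv huv using fun j => exists_log (hu j) (hu0 j)
  refine ⟨Equiv.ofBijective π (Finite.injective_iff_bijective.1 hinj), v, hv, ?_⟩
  filter_upwards [eventually_all.2 hχu, eventually_all.2 huv] with z z1 z2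
  ext j
  simp only [Equiv.ofBijective_apply, diagMap, ← z2 j, z1 j]

/-- A volume-preserving change of coordinates can only transform the product of the coordinates
into itself or its opposite. -/
theorem eq_or_eq_neg_of_volumePreserving (N : Fin n) {χ : (Fin n → ℂ) → (Fin n → ℂ)}
    (hχ : AnalyticAt ℂ χ 0) (hvol : IsVolumePreserving χ) {lam : ℂ → ℂ}
    (hl : AnalyticAt ℂ lam 0) (hl0 : lam 0 = 0)
    (hp : ∀ᶠ z in 𝓝 (0 : Fin n → ℂ), ∏ i, χ z i = lam (∏ i, z i)) :
    (∀ᶠ t in 𝓝 (0 : ℂ), lam t = t) ∨ ∀ᶠ t in 𝓝 (0 : ℂ), lam t = -t := by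
  obtain ⟨e, v, hv, hev⟩ := exists_perm hχ (by
    rw [hvol.self_of_nhds]; exact one_ne_zero) hl0 hp
  have h1 := prod_factor N hl hl0 hv (ε := (Equiv.Perm.sign e : ℤ)) (by
      filter_upwards [hev, hp] with z z1 z2
      rw [← z1, ← z2]
      exact Equiv.prod_comp e fun i => χ z i) (by
      filter_upwards [det_fderiv_congr hev, det_permute_coord hχ e, hvol] with z z1 z2 z3
      rw [← z1, z2, z3, mul_one])
  rcases Int.units_eq_one_or (Equiv.Perm.sign e) with h | h
  · left
    simpa [h] using h1
  · right
    simpa [h] using h1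

end Permutation

/-- **Corollary 1.** If moreover `f` is right equivalent to the product of all
coordinates, then `M` has the volume-preserving normal form `{Re(Ψ(z₁⋯zₙ)) = 0}`,
with `Ψ` uniquely determined by `f` up to a sign. -/
theorem stmt_3 (n : ℕ) (hn : 2 ≤ n) (f : (Fin n → ℂ) → ℂ)
    (hf : AnalyticAt ℂ f 0)
    -- `f(z) = z₁ ⋯ zₙ + O(|z|^{n+1})`
    (hford : (fun z : Fin n → ℂ => f z - ∏ i, z i) =O[𝓝 0] fun z => ‖z‖ ^ (n + 1))
    -- `f` is right equivalent to the product of all coordinates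
    (hre : ∃ σ σι : (Fin n → ℂ) → (Fin n → ℂ), IsGermBiholo σ σι ∧
      ∀ᶠ z in 𝓝 (0 : Fin n → ℂ), f (σι z) = ∏ i, z i) :
    ∃ Φ Φι : (Fin n → ℂ) → (Fin n → ℂ), IsGermBiholo Φ Φι ∧ IsVolumePreserving Φ ∧
    ∃ Ψ : ℂ → ℂ, IsGermAuto Ψ ∧
      -- `f ∘ Φ⁻¹ = Ψ(z₁ ⋯ zₙ)`, hence
      (∀ᶠ z in 𝓝 (0 : Fin n → ℂ), f (Φι z) = Ψ (∏ i, z i)) ∧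
      -- `Φ(M) = {Re(Ψ(z₁ ⋯ zₙ)) = 0}` as germs of sets at `0`, where `M = {Re f = 0}`
      (∀ᶠ z in 𝓝 (0 : Fin n → ℂ), ((f z).re = 0 ↔ (Ψ (∏ i, Φ z i)).re = 0)) ∧
      -- `Ψ` is uniquely determined by `f` up to a sign
      (∀ Φ' Φι' : (Fin n → ℂ) → (Fin n → ℂ), ∀ Ψ' : ℂ → ℂ,
        IsGermBiholo Φ' Φι' → IsVolumePreserving Φ' → IsGermAuto Ψ' →
        (∀ᶠ z in 𝓝 (0 : Fin n → ℂ), f (Φι' z) = Ψ' (∏ i, z i)) →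
        (∀ᶠ t in 𝓝 (0 : ℂ), Ψ' t = Ψ t) ∨ (∀ᶠ t in 𝓝 (0 : ℂ), Ψ' t = Ψ (-t))) := by
  obtain ⟨σ, σι, hσ, hfσ⟩ := hre
  set N : Fin n := ⟨0, by omega⟩
  have hσdet := hσ.symm.det_mul
  -- transport of the standard volume form by `σ` gives the density `det Dσ⁻¹`
  obtain ⟨χ, χι, hχ, hχdet, lam, hlam, hχp⟩ := exists_normal_form N
    (g := fun z => LinearMap.det (fderiv ℂ σι z).toLinearMap) (analyticAt_det_fderiv hσ.2.1) (by
      have := hσdet.self_of_nhds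
      rw [hσ.2.2.1] at this
      exact left_ne_zero_of_mul_eq_one this)
  obtain ⟨Ψ, hΨ, hΨl, hlΨ⟩ := hlam.exists_inverse
  have hΦ := hχ.comp hσ
  have hvol : IsVolumePreserving fun z => χ (σ z) := by
    filter_upwards [det_fderiv_comp hχ.1 hσ.1 hσ.2.2.1, hσ.tendsto.eventually hχdet, hσdet]
      with z h1 h2 h3
    rw [h1, h2, h3]
  have hfΦ : ∀ᶠ z in 𝓝 (0 : Fin n → ℂ), f (σι (χι z)) = Ψ (∏ i, z i) := by
    filter_upwards [hχ.symm.tendsto.eventually hfσ, hχ.symm.tendsto.eventually hχp,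
      hχ.2.2.2.2.2, hχ.symm.tendsto.eventually ((tendsto_prod_coord N).eventually hΨl)]
      with z h1 h2 h3 h4
    rw [h3] at h2
    rw [h1, h2, h4]
  refine ⟨_, _, hΦ, hvol, Ψ, hΨ, hfΦ, ?_, ?_⟩
  · filter_upwards [hΦ.2.2.2.2.1, hΦ.tendsto.eventually hfΦ] with z h1 h2
    rw [← h2, h1]
  · intro Φ' Φι' Ψ' hΦ' hvol' hΨ' hf'
    obtain ⟨ψ, hψ, hψl, hψr⟩ := hΨ'.exists_inverse
    have hc := hΦ'.comp hΦ.symm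
    have hΨt : Tendsto Ψ (𝓝 0) (𝓝 0) := by simpa [hΨ.2.1] using hΨ.1.continuousAt.tendsto
    have key := eq_or_eq_neg_of_volumePreserving N hc.1 (by
        filter_upwards [det_fderiv_comp hΦ'.1 hΦ.2.1 hΦ.2.2.2.1, hΦ.det_mul,
          hΦ.symm.tendsto.eventually hvol, hΦ.symm.tendsto.eventually hvol'] with z h1 h2 h3 h4
        rw [h3, one_mul] at h2
        rw [h1, h2, h4, one_mul]) (lam := fun t => ψ (Ψ t))
      (AnalyticAt.fun_comp (by rw [hΨ.2.1]; exact hψ.1) hΨ.1) (by simp [hΨ.2.1, hψ.2.1]) (by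
        filter_upwards [hfΦ, hc.tendsto.eventually hf', hΦ.symm.tendsto.eventually hΦ'.2.2.2.2.1,
          hc.tendsto.eventually ((tendsto_prod_coord N).eventually hψl)] with z h1 h2 h3 h4
        rw [h3, h1] at h2
        rw [h2, h4])
    rcases key with key | key
    · left
      filter_upwards [key, hΨt.eventually hψr] with t h1 h2
      rw [h1] at h2
      exact h2
    · right
      have hneg : Tendsto (fun t : ℂ => -t) (𝓝 0) (𝓝 0) := by
        simpa using (continuous_neg (G := ℂ)).tendsto 0
      filter_upwards [hneg.eventually key, hneg.eventually (hΨt.eventually hψr)] with t h1 h2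
      rw [h1, neg_neg] at h2
      exact h2
end

section
/- Let M = {F = 0} be a germ of an irreducible singular real-analytic Levi-flat hypersurface at 0 ∈ ℂ² with F(z) = Re(Q(z)) + H(z, z̄), where Q is a quasihomogeneous polynomial of type (a,b) with gcd(a,b) = 1 and quasihomogeneous degree d, having an isolated singularity at 0 ∈ ℂ², and H is real-analytic with all Taylor monomials of weighted degree strictly greater than d and H(z, z̄) = conj(H(z̄, z)). Then the algebraic dimension of Sing(M) is 0; that is, there is a neighborhood of 0 ∈ ℂ⁴ in which the origin is the only common zero of F_ℂ and dF_ℂ, so Sing(M_ℂ) = {0} as a germ at 0 ∈ ℂ⁴. -/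
/-!
The complexification splits as `FC = P + G`, where `P(z, w) = (Q(z) + Q̄(w)) / 2` (`reC Q`) is
quasihomogeneous of degree `d` for the weights `(a, b; a, b)`, and `G` is the complexification of `H`.
The origin is the only critical point of `P` near `0`, because `∂P/∂z` and `∂P/∂w` are the gradients
of `Q` at `z` and, up to conjugation, at `w̄`. A perturbation of higher weighted order does not change
this.

The weighted order condition is only known on the totally real subspace `{(z, z̄)}` and for real
dilation parameters. The Taylor coefficients of `t ↦ G (t · q)` are holomorphic in `q`, so those of
index at most `d` vanish for all small `q` (`succ_le_order_wscale`). The Schwarz lemma in `t` and the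
Cauchy estimate in `q` then give `‖d_q (G (t · q))‖ ≤ K ‖t‖ ^ (d + 1)`, uniformly on a sphere
(`norm_fderiv_wscale_le`).

A critical point `p ≠ 0` of `FC` near `0` is `t · q` with `q` on a fixed sphere and `t > 0` small
(`exists_wscale_eq`). Differentiating `FC (t · q) = t ^ d P(q) + G (t · q)` in `q` yields
`‖dP(q)‖ ≤ K t`, which contradicts the positive lower bound of `‖dP‖` on the compact sphere.
-/

open Filter Topology

/-- `FC` is the complexification of `F`: the (unique) germ of holomorphic function at
`0 ∈ ℂⁿ × ℂⁿ` such that `FC (z, z̄) = F z` near `0`. -/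
def IsComplexification {n : ℕ} (F : (Fin n → ℂ) → ℝ)
    (FC : ((Fin n → ℂ) × (Fin n → ℂ)) → ℂ) : Prop :=
  AnalyticAt ℂ FC 0 ∧ ∀ᶠ z in 𝓝 (0 : Fin n → ℂ), FC (z, star z) = ((F z : ℝ) : ℂ)

/-- The singular set `Sing(M_ℂ) = {F_ℂ = 0} ∩ {dF_ℂ = 0}` of the complexification. -/
def singMC {n : ℕ} (FC : ((Fin n → ℂ) × (Fin n → ℂ)) → ℂ) :
    Set ((Fin n → ℂ) × (Fin n → ℂ)) :=
  {p | FC p = 0 ∧ fderiv ℂ FC p = 0}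

/-- The singular set of the complexified Levi foliation `L_ℂ`: points of
`M*_ℂ` at which `α = Σ_j (∂F_ℂ/∂z_j) dz_j` vanishes on `T_p M_ℂ = ker dF_ℂ(p)`.
Note that `α(p)(v) = dF_ℂ(p)(v₁, 0)`. -/
def singLC {n : ℕ} (FC : ((Fin n → ℂ) × (Fin n → ℂ)) → ℂ) :
    Set ((Fin n → ℂ) × (Fin n → ℂ)) :=
  {p | FC p = 0 ∧ fderiv ℂ FC p ≠ 0 ∧
    ∀ v : (Fin n → ℂ) × (Fin n → ℂ), fderiv ℂ FC p v = 0 → fderiv ℂ FC p (v.1, 0) = 0}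

open Metric

/-! ### Holomorphic functions and the real subspace `{(z, z̄)}` -/

/-- Any `q` is `x + i y` with `x, y` of the form `(z, z̄)`. -/
theorem exists_conj_decomp (q : (Fin 2 → ℂ) × (Fin 2 → ℂ)) :
    ∃ x y : Fin 2 → ℂ, ‖x‖ ≤ ‖q‖ ∧ ‖y‖ ≤ ‖q‖ ∧
      q = (x, star x) + Complex.I • ((y, star y) : (Fin 2 → ℂ) × (Fin 2 → ℂ)) := by
  have h1 : ‖q.1‖ ≤ ‖q‖ := norm_fst_le q
  have h2 : ‖star q.2‖ ≤ ‖q‖ := by rw [norm_star]; exact norm_snd_le q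
  refine ⟨(1 / 2 : ℂ) • (q.1 + star q.2), (-Complex.I / 2) • (q.1 - star q.2), ?_, ?_, ?_⟩
  · rw [norm_smul]
    have := norm_add_le q.1 (star q.2)
    norm_num
    linarith
  · rw [norm_smul]
    have := norm_sub_le q.1 (star q.2)
    norm_num
    linarith
  · ext i
    · simp
      linear_combination (q.1 i - starRingEnd ℂ (q.2 i)) / 2 * Complex.I_sq
    · simp
      linear_combination (q.2 i - starRingEnd ℂ (q.1 i)) / 2 * Complex.I_sq

/-- A holomorphic function vanishing on the totally real subspace `{(z, z̄)}` vanishes identically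
near `0`: restrict it to the complex line `t ↦ X + t Y` with `X, Y` in that subspace. -/
theorem eq_zero_of_eq_zero_on_conj {φ : (Fin 2 → ℂ) × (Fin 2 → ℂ) → ℂ} {R : ℝ}
    (hφ : DifferentiableOn ℂ φ (ball 0 R))
    (h0 : ∀ z : Fin 2 → ℂ, ‖z‖ < R → φ (z, star z) = 0)
    {q : (Fin 2 → ℂ) × (Fin 2 → ℂ)} (hq : ‖q‖ < R / 4) : φ q = 0 := by
  obtain ⟨x, y, hx, hy, hxy⟩ := exists_conj_decomp q
  set X : (Fin 2 → ℂ) × (Fin 2 → ℂ) := (x, star x) with hX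
  set Y : (Fin 2 → ℂ) × (Fin 2 → ℂ) := (y, star y) with hY
  have hXn : ‖X‖ = ‖x‖ := by simp [hX, Prod.norm_def]
  have hYn : ‖Y‖ = ‖y‖ := by simp [hY, Prod.norm_def]
  have hmem : ∀ t ∈ ball (0 : ℂ) 2, X + t • Y ∈ ball (0 : (Fin 2 → ℂ) × (Fin 2 → ℂ)) R := by
    intro t ht
    rw [mem_ball_zero_iff] at ht ⊢
    have h1 := norm_add_le X (t • Y)
    rw [norm_smul, hXn, hYn] at h1
    have h2 : ‖t‖ * ‖y‖ ≤ 2 * ‖q‖ := mul_le_mul ht.le hy (norm_nonneg _) (by norm_num)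
    have := norm_nonneg q
    linarith
  have hm : DifferentiableOn ℂ (fun t : ℂ => φ (X + t • Y)) (ball 0 2) :=
    hφ.comp (by fun_prop) hmem
  have hreal : ∀ t : ℝ, |t| < 2 → φ (X + (t : ℂ) • Y) = 0 := by
    intro t ht
    have e : X + (t : ℂ) • Y = (x + (t : ℂ) • y, star (x + (t : ℂ) • y)) := by
      ext i <;> simp [hX, hY]
    have hb := hmem t (by simpa using ht)
    rw [mem_ball_zero_iff, e] at hb
    rw [e]
    exact h0 _ ((norm_fst_le _).trans_lt hb)
  have hfreq : ∃ᶠ t in 𝓝[≠] (0 : ℂ), φ (X + t • Y) = 0 := by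
    have hT : Tendsto (fun t : ℝ => (t : ℂ)) (𝓝[>] 0) (𝓝[≠] 0) := by
      refine tendsto_nhdsWithin_iff.2 ⟨?_, ?_⟩
      · have : Tendsto (fun t : ℝ => (t : ℂ)) (𝓝 0) (𝓝 ((0 : ℝ) : ℂ)) :=
          Complex.continuous_ofReal.tendsto 0
        simpa using this.mono_left nhdsWithin_le_nhds
      · filter_upwards [self_mem_nhdsWithin] with t ht
        simpa using (ne_of_gt ht : t ≠ 0)
    refine hT.frequently (Eventually.frequently ?_)
    filter_upwards [Ioo_mem_nhdsGT (show (0 : ℝ) < 2 by norm_num)] with t ht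
    exact hreal t (by rw [abs_of_pos ht.1]; exact ht.2)
  have hz := (hm.analyticOnNhd isOpen_ball).eqOn_zero_of_preconnected_of_frequently_eq_zero
    (convex_ball _ _).isPreconnected (mem_ball_self (by norm_num)) hfreq
  have hI : Complex.I ∈ ball (0 : ℂ) 2 := by simp
  rw [hxy]
  exact hz hI

/-- Iterated partial derivatives in the first variable of an analytic function are jointly analytic.
In particular, the Taylor coefficients at `t = 0` depend analytically on `q`. -/
theorem exists_analytic_iteratedDeriv {E : Type*} [NormedAddCommGroup E] [NormedSpace ℂ E]
    {f : ℂ × E → ℂ} {s : Set (ℂ × E)} (hs : IsOpen s) (hf : AnalyticOnNhd ℂ f s) (k : ℕ) :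
    ∃ g : ℂ × E → ℂ, AnalyticOnNhd ℂ g s ∧
      ∀ t q, (t, q) ∈ s → iteratedDeriv k (fun t => f (t, q)) t = g (t, q) := by
  induction k with
  | zero => exact ⟨f, hf, fun t q _ => by simp⟩
  | succ k ih =>
    obtain ⟨g, hg, hgeq⟩ := ih
    refine ⟨fun x => fderiv ℂ g x (1, 0), fun x hx => ?_, fun t q hx => ?_⟩
    · exact ((ContinuousLinearMap.apply ℂ ℂ ((1, 0) : ℂ × E)).analyticAt _).comp (hg.fderiv x hx)
    · rw [iteratedDeriv_succ]
      have hev : iteratedDeriv k (fun t => f (t, q)) =ᶠ[𝓝 t] fun t => g (t, q) := by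
        have hc : ContinuousAt (fun t : ℂ => (t, q)) t := by fun_prop
        filter_upwards [hc.preimage_mem_nhds (hs.mem_nhds hx)] with t' ht' using hgeq t' q ht'
      rw [hev.deriv_eq]
      have h1 : HasDerivAt (fun t : ℂ => (t, q)) ((1, 0) : ℂ × E) t :=
        (hasDerivAt_id t).prodMk (hasDerivAt_const t q)
      exact ((hg _ hx).differentiableAt.hasFDerivAt.comp_hasDerivAt t h1).deriv

/-- If `g t = o(t ^ d)` along the positive reals only, then `g` already vanishes to order `d + 1`. -/
theorem succ_le_analyticOrderAt_of_tendsto {g : ℂ → ℂ} (hg : AnalyticAt ℂ g 0) {d : ℕ}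
    (h : Tendsto (fun t : ℝ => g t / (t : ℂ) ^ d) (𝓝[>] 0) (𝓝 0)) :
    ((d + 1 : ℕ) : ℕ∞) ≤ analyticOrderAt g 0 := by
  by_contra hlt
  push Not at hlt
  have htop : analyticOrderAt g 0 ≠ ⊤ := ne_top_of_lt hlt
  obtain ⟨u, hu, hu0, hgu⟩ := hg.analyticOrderAt_ne_top.1 htop
  set n := analyticOrderNatAt g 0
  have hn : n ≤ d := by
    rw [← Nat.cast_analyticOrderNatAt htop] at hlt
    have : n < d + 1 := by exact_mod_cast hlt
    omega
  have hof : Tendsto (fun t : ℝ => (t : ℂ)) (𝓝[>] 0) (𝓝 0) := by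
    have : Tendsto (fun t : ℝ => (t : ℂ)) (𝓝 0) (𝓝 ((0 : ℝ) : ℂ)) :=
      Complex.continuous_ofReal.tendsto 0
    simpa using this.mono_left nhdsWithin_le_nhds
  -- multiplying the limit by `t ^ (d - n)` gives `u t → 0`
  have h1 : Tendsto (fun t : ℝ => (t : ℂ) ^ (d - n) * (g t / (t : ℂ) ^ d)) (𝓝[>] 0) (𝓝 0) := by
    simpa using (hof.pow (d - n)).mul h
  have h2 : Tendsto (fun t : ℝ => u (t : ℂ)) (𝓝[>] 0) (𝓝 (u 0)) :=
    hu.continuousAt.tendsto.comp hof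
  refine hu0 (tendsto_nhds_unique_of_eventuallyEq h2 h1 ?_)
  filter_upwards [hof.eventually hgu, self_mem_nhdsWithin] with t ht htpos
  have ht0 : (t : ℂ) ≠ 0 := by exact_mod_cast (ne_of_gt htpos)
  rw [ht]
  have : (t : ℂ) ^ d = (t : ℂ) ^ (d - n) * (t : ℂ) ^ n := by rw [← pow_add]; congr 1; omega
  rw [this]
  simp
  field_simp

theorem isLittleO_of_succ_le_analyticOrderAt {g : ℂ → ℂ} (hg : AnalyticAt ℂ g 0) {d : ℕ}
    (h : ((d + 1 : ℕ) : ℕ∞) ≤ analyticOrderAt g 0) :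
    g =o[𝓝 0] (fun t : ℂ => ‖t‖ ^ d) := by
  obtain ⟨u, hu, hgu⟩ := (natCast_le_analyticOrderAt hg).1 h
  have h1 : (fun t : ℂ => (t - 0) ^ (d + 1) • u t) =o[𝓝 0] (fun t : ℂ => ‖t‖ ^ d) := by
    have hz : Tendsto (fun t : ℂ => t * u t) (𝓝 0) (𝓝 0) := by
      have := (tendsto_id (α := ℂ) (x := 𝓝 0)).mul hu.continuousAt.tendsto
      simpa using this
    have h2 : (fun t : ℂ => t * u t) =o[𝓝 0] (fun _ => (1 : ℝ)) :=
      (Asymptotics.isLittleO_one_iff ℝ).2 hz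
    have h3 : (fun t : ℂ => t ^ d) =O[𝓝 0] (fun t : ℂ => ‖t‖ ^ d) := by
      refine Asymptotics.IsBigO.of_bound 1 (Eventually.of_forall fun t => ?_)
      simp
    refine (h3.mul_isLittleO h2).congr (fun t => ?_) (fun t => ?_)
    · simp; ring
    · simp
  exact h1.congr' (hgu.mono fun t ht => ht.symm) EventuallyEq.rfl

/-! ### Weighted dilations -/

/-- The weighted action of `ℂ` on `ℂ² × ℂ²`: the `i`-th coordinate of each factor is multiplied by
`t ^ w i`. It preserves the real subspace `{(z, z̄)}` when `t` is real. -/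
def wscale (w : Fin 2 → ℕ) (t : ℂ) (q : (Fin 2 → ℂ) × (Fin 2 → ℂ)) :
    (Fin 2 → ℂ) × (Fin 2 → ℂ) :=
  (fun i => t ^ w i * q.1 i, fun i => t ^ w i * q.2 i)

theorem analyticAt_wscale (w : Fin 2 → ℕ) (x : ℂ × ((Fin 2 → ℂ) × (Fin 2 → ℂ))) :
    AnalyticAt ℂ (fun x : ℂ × ((Fin 2 → ℂ) × (Fin 2 → ℂ)) => wscale w x.1 x.2) x := by
  unfold wscale
  refine AnalyticAt.prod ?_ ?_ <;> rw [analyticAt_pi_iff] <;> intro i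
  · have h : AnalyticAt ℂ (fun x : ℂ × ((Fin 2 → ℂ) × (Fin 2 → ℂ)) => x.2.1 i) x :=
      ((ContinuousLinearMap.proj (R := ℂ) (φ := fun _ : Fin 2 => ℂ) i).comp
        ((ContinuousLinearMap.fst ℂ _ _).comp (ContinuousLinearMap.snd ℂ ℂ _))).analyticAt x
    exact (analyticAt_fst.pow _).mul h
  · have h : AnalyticAt ℂ (fun x : ℂ × ((Fin 2 → ℂ) × (Fin 2 → ℂ)) => x.2.2 i) x :=
      ((ContinuousLinearMap.proj (R := ℂ) (φ := fun _ : Fin 2 => ℂ) i).comp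
        ((ContinuousLinearMap.snd ℂ _ _).comp (ContinuousLinearMap.snd ℂ ℂ _))).analyticAt x
    exact (analyticAt_fst.pow _).mul h

theorem norm_wscale_le {w : Fin 2 → ℕ} (hw : ∀ i, 0 < w i) {t : ℂ} (ht : ‖t‖ ≤ 1)
    (q : (Fin 2 → ℂ) × (Fin 2 → ℂ)) : ‖wscale w t q‖ ≤ ‖t‖ * ‖q‖ := by
  have key : ∀ i (c : ℂ), ‖c‖ ≤ ‖q‖ → ‖t ^ w i * c‖ ≤ ‖t‖ * ‖q‖ := fun i c hc => by
    rw [norm_mul, norm_pow]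
    exact mul_le_mul (pow_le_of_le_one (norm_nonneg _) ht (hw i).ne') hc (norm_nonneg _)
      (norm_nonneg _)
  have hq : 0 ≤ ‖t‖ * ‖q‖ := by positivity
  refine norm_prod_le_iff.2 ⟨(pi_norm_le_iff_of_nonneg hq).2 fun i => key i _ ?_,
    (pi_norm_le_iff_of_nonneg hq).2 fun i => key i _ ?_⟩
  · exact (norm_le_pi_norm q.1 i).trans (norm_fst_le q)
  · exact (norm_le_pi_norm q.2 i).trans (norm_snd_le q)

theorem pow_mul_norm_le_norm_wscale {w : Fin 2 → ℕ} {W : ℕ} (hW : ∀ i, w i ≤ W) {t : ℂ}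
    (ht : ‖t‖ ≤ 1) (q : (Fin 2 → ℂ) × (Fin 2 → ℂ)) : ‖t‖ ^ W * ‖q‖ ≤ ‖wscale w t q‖ := by
  have key : ∀ i (c : ℂ), ‖t ^ W * c‖ ≤ ‖t ^ w i * c‖ := fun i c => by
    simp only [norm_mul, norm_pow]
    exact mul_le_mul_of_nonneg_right (pow_le_pow_of_le_one (norm_nonneg _) ht (hW i))
      (norm_nonneg _)
  rw [← norm_pow, ← norm_smul]
  have hn := norm_nonneg (wscale w t q)
  refine norm_prod_le_iff.2 ⟨(pi_norm_le_iff_of_nonneg hn).2 fun i => (key i (q.1 i)).trans ?_,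
    (pi_norm_le_iff_of_nonneg hn).2 fun i => (key i (q.2 i)).trans ?_⟩
  · exact (norm_le_pi_norm (wscale w t q).1 i).trans (norm_fst_le _)
  · exact (norm_le_pi_norm (wscale w t q).2 i).trans (norm_snd_le _)

theorem wscale_wscale (w : Fin 2 → ℕ) (s t : ℂ) (q : (Fin 2 → ℂ) × (Fin 2 → ℂ)) :
    wscale w s (wscale w t q) = wscale w (s * t) q := by
  simp [wscale, mul_pow, mul_assoc]

theorem wscale_one (w : Fin 2 → ℕ) (q : (Fin 2 → ℂ) × (Fin 2 → ℂ)) :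
    wscale w 1 q = q := by
  simp [wscale]

/-- Weighted polar coordinates: a nonzero point of norm at most `ρ` is a contraction of a point of
the sphere of radius `ρ`. -/
theorem exists_wscale_eq {w : Fin 2 → ℕ} (hw : ∀ i, 0 < w i) {ρ : ℝ}
    {p : (Fin 2 → ℂ) × (Fin 2 → ℂ)} (hp : p ≠ 0) (hpρ : ‖p‖ ≤ ρ) :
    ∃ t : ℝ, 0 < t ∧ t ≤ 1 ∧ ∃ q, ‖q‖ = ρ ∧ p = wscale w (t : ℂ) q := by
  have hp0 : 0 < ‖p‖ := norm_pos_iff.2 hp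
  have hS : 1 ≤ ρ / ‖p‖ := (one_le_div hp0).2 hpρ
  set S := ρ / ‖p‖ with hSdef
  have hinv : ∀ s : ℝ, 1 ≤ s → p = wscale w ((s⁻¹ : ℝ) : ℂ) (wscale w (s : ℂ) p) := by
    intro s hs
    have : (s : ℂ) ≠ 0 := by exact_mod_cast (by linarith : (0 : ℝ) < s).ne'
    rw [wscale_wscale, Complex.ofReal_inv, inv_mul_cancel₀ this, wscale_one]
  have hcont : Continuous (fun s : ℝ => ‖wscale w (s : ℂ) p‖) := by
    unfold wscale
    fun_prop
  have hend : ρ ≤ ‖wscale w (S : ℂ) p‖ := by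
    have hS0 : 0 < S := by linarith
    have h1 := norm_wscale_le hw (t := ((S⁻¹ : ℝ) : ℂ))
      (by rw [Complex.norm_real, Real.norm_of_nonneg (by positivity)]; exact inv_le_one_of_one_le₀ hS)
      (wscale w (S : ℂ) p)
    rw [← hinv S hS, Complex.norm_real, Real.norm_of_nonneg (by positivity),
      inv_mul_eq_div, le_div_iff₀ hS0, hSdef] at h1
    calc ρ = ‖p‖ * (ρ / ‖p‖) := by field_simp
      _ ≤ _ := h1
  obtain ⟨s, hs, hsρ⟩ := intermediate_value_Icc hS hcont.continuousOn
    (show ρ ∈ Set.Icc _ _ from ⟨by simpa [wscale_one] using hpρ, hend⟩)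
  have hs0 : 0 < s := by linarith [hs.1]
  exact ⟨s⁻¹, inv_pos.2 hs0, inv_le_one_of_one_le₀ hs.1, wscale w (s : ℂ) p, hsρ, hinv s hs.1⟩

/-- Weighted order greater than `d` along the real subspace `{(z, z̄)}` propagates to all points
near `0`, because each Taylor coefficient of `t ↦ G (t · q)` is holomorphic in `q`. -/
theorem succ_le_order_wscale {w : Fin 2 → ℕ} (hw : ∀ i, 0 < w i) {d : ℕ} {R : ℝ}
    {G : (Fin 2 → ℂ) × (Fin 2 → ℂ) → ℂ} (hG : AnalyticOnNhd ℂ G (ball 0 R))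
    (h0 : ∀ z : Fin 2 → ℂ, ‖z‖ < R →
      Tendsto (fun t : ℝ => G (wscale w (t : ℂ) (z, star z)) / (t : ℂ) ^ d) (𝓝[>] 0) (𝓝 0))
    {q : (Fin 2 → ℂ) × (Fin 2 → ℂ)} (hq : ‖q‖ < R / 4) :
    ((d + 1 : ℕ) : ℕ∞) ≤ analyticOrderAt (fun t : ℂ => G (wscale w t q)) 0 := by
  have hR : 0 < R := by linarith [norm_nonneg q]
  set s : Set (ℂ × ((Fin 2 → ℂ) × (Fin 2 → ℂ))) := ball 0 1 ×ˢ ball 0 R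
  have hs : IsOpen s := isOpen_ball.prod isOpen_ball
  have hmem : ∀ x ∈ s, wscale w x.1 x.2 ∈ ball (0 : (Fin 2 → ℂ) × (Fin 2 → ℂ)) R := by
    rintro ⟨t, q⟩ ⟨ht, hq⟩
    rw [mem_ball_zero_iff] at ht hq ⊢
    refine (norm_wscale_le hw ht.le q).trans_lt (lt_of_le_of_lt ?_ hq)
    exact mul_le_of_le_one_left (norm_nonneg _) ht.le
  have hf : AnalyticOnNhd ℂ (fun x : ℂ × ((Fin 2 → ℂ) × (Fin 2 → ℂ)) => G (wscale w x.1 x.2)) s :=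
    fun x hx => AnalyticAt.fun_comp
      (f := fun x : ℂ × ((Fin 2 → ℂ) × (Fin 2 → ℂ)) => wscale w x.1 x.2)
      (hG _ (hmem x hx)) (analyticAt_wscale w x)
  have hslice : ∀ q : (Fin 2 → ℂ) × (Fin 2 → ℂ), ‖q‖ < R →
      AnalyticAt ℂ (fun t : ℂ => G (wscale w t q)) 0 := by
    intro q hq
    have h1 : AnalyticAt ℂ (fun t : ℂ => (t, q)) 0 := analyticAt_id.prod analyticAt_const
    exact AnalyticAt.fun_comp (f := fun t : ℂ => (t, q)) (hf (0, q) ⟨by simp, by simpa using hq⟩) h1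
  rw [natCast_le_analyticOrderAt_iff_iteratedDeriv_eq_zero (hslice q (by linarith))]
  intro k hk
  obtain ⟨g, hg, hgeq⟩ := exists_analytic_iteratedDeriv hs hf k
  have hmem0 : ∀ q : (Fin 2 → ℂ) × (Fin 2 → ℂ), ‖q‖ < R → ((0 : ℂ), q) ∈ s :=
    fun q hq => ⟨by simp, by simpa using hq⟩
  rw [hgeq 0 q (hmem0 q (by linarith))]
  refine eq_zero_of_eq_zero_on_conj (φ := fun q => g (0, q)) (R := R) (fun p hp => ?_) ?_ hq
  · have h1 : DifferentiableAt ℂ (fun q : (Fin 2 → ℂ) × (Fin 2 → ℂ) => ((0 : ℂ), q)) p := by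
      fun_prop
    have h2 := (hg (0, p) (hmem0 p (by simpa using hp))).differentiableAt
    exact (DifferentiableAt.comp p h2 h1).differentiableWithinAt
  · intro z hz
    have hzn : ‖((z, star z) : (Fin 2 → ℂ) × (Fin 2 → ℂ))‖ < R := by
      simpa [Prod.norm_def] using hz
    change g (0, (z, star z)) = 0
    rw [← hgeq 0 _ (hmem0 _ hzn)]
    exact (natCast_le_analyticOrderAt_iff_iteratedDeriv_eq_zero (hslice _ hzn)).1
      (succ_le_analyticOrderAt_of_tendsto (hslice _ hzn) (h0 z hz)) k hk

/-- A function `G` of weighted order greater than `d` satisfies `G (t · q) = O(t ^ (d + 1))`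
uniformly in `q`, by the Schwarz lemma in `t`; the Cauchy estimate in `q` gives the same for the
`q`-derivative. -/
theorem norm_fderiv_wscale_le {w : Fin 2 → ℕ} (hw : ∀ i, 0 < w i) {d : ℕ} {R C : ℝ}
    {G : (Fin 2 → ℂ) × (Fin 2 → ℂ) → ℂ} (hG : AnalyticOnNhd ℂ G (ball 0 R))
    (hC : ∀ p ∈ ball (0 : (Fin 2 → ℂ) × (Fin 2 → ℂ)) R, ‖G p‖ ≤ C)
    (h0 : ∀ z : Fin 2 → ℂ, ‖z‖ < R →
      Tendsto (fun t : ℝ => G (wscale w (t : ℂ) (z, star z)) / (t : ℂ) ^ d) (𝓝[>] 0) (𝓝 0))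
    (hR : 0 < R) {q : (Fin 2 → ℂ) × (Fin 2 → ℂ)} (hq : ‖q‖ ≤ R / 8) {t : ℂ} (ht : ‖t‖ < 1) :
    DifferentiableAt ℂ (fun q => G (wscale w t q)) q ∧
      ‖fderiv ℂ (fun q => G (wscale w t q)) q‖ ≤ 2 * (C * ‖t‖ ^ (d + 1)) / (R / 8) := by
  have hmem : ∀ (t : ℂ) (q : (Fin 2 → ℂ) × (Fin 2 → ℂ)), ‖t‖ < 1 → ‖q‖ < R / 4 →
      wscale w t q ∈ ball (0 : (Fin 2 → ℂ) × (Fin 2 → ℂ)) R := by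
    intro t q ht hq
    rw [mem_ball_zero_iff]
    have h1 := norm_wscale_le hw ht.le q
    have h2 := mul_le_of_le_one_left (norm_nonneg q) ht.le
    linarith
  have hdt : ∀ (q : (Fin 2 → ℂ) × (Fin 2 → ℂ)), Differentiable ℂ (fun t => wscale w t q) := by
    intro q; unfold wscale; fun_prop
  have hdq : Differentiable ℂ (fun q => wscale w t q) := by
    unfold wscale; fun_prop
  have hbound : ∀ q : (Fin 2 → ℂ) × (Fin 2 → ℂ), ‖q‖ < R / 4 →
      ‖G (wscale w t q)‖ ≤ C * ‖t‖ ^ (d + 1) := by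
    intro q hq
    have hd : DifferentiableOn ℂ (fun t => G (wscale w t q)) (ball 0 1) :=
      hG.differentiableOn.comp (hdt q).differentiableOn
        (fun t ht => hmem t q (by simpa using ht) hq)
    have han := hd.analyticOnNhd isOpen_ball 0 (by simp)
    have hord := succ_le_order_wscale hw hG h0 hq
    have hg0 : G (wscale w 0 q) = 0 := by
      refine apply_eq_zero_of_analyticOrderAt_ne_zero (f := fun t => G (wscale w t q)) ?_
      intro h
      rw [h] at hord
      simp at hord
    have hO := isLittleO_of_succ_le_analyticOrderAt han hord
    have := Complex.dist_le_mul_div_pow_of_mapsTo_ball_of_isLittleO (R₂ := C) (n := d) hd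
      (fun t ht => by
        simpa [hg0] using hC _ (hmem t q (by simpa using ht) hq))
      (by simpa [hg0] using hO) (show t ∈ ball (0 : ℂ) 1 by simpa using ht)
    simpa [hg0] using this
  have hball : ∀ q' ∈ ball q (R / 8), ‖q'‖ < R / 4 := by
    intro q' hq'
    rw [mem_ball_iff_norm] at hq'
    have := norm_le_norm_add_norm_sub' q' q
    linarith
  have hdiff : DifferentiableOn ℂ (fun q => G (wscale w t q)) (ball q (R / 8)) :=
    hG.differentiableOn.comp hdq.differentiableOn (fun q' hq' => hmem t q' ht (hball q' hq'))
  have hqb : q ∈ ball q (R / 8) := mem_ball_self (by positivity)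
  refine ⟨hdiff.differentiableAt (isOpen_ball.mem_nhds hqb), ?_⟩
  refine Complex.norm_fderiv_le_div_of_mapsTo_ball hdiff (fun q' hq' => ?_) (by positivity)
  rw [mem_closedBall_iff_norm]
  have h1 := hbound q' (hball q' hq')
  have h2 := hbound q (hball q hqb)
  have h3 := norm_sub_le (G (wscale w t q')) (G (wscale w t q))
  linarith

/-! ### The leading part -/

theorem hasFDerivAt_mvEval (Q : MvPolynomial (Fin 2) ℂ) (z : Fin 2 → ℂ) :
    HasFDerivAt (𝕜 := ℂ) (fun z : Fin 2 → ℂ => MvPolynomial.eval z Q)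
      (∑ i, MvPolynomial.eval z (MvPolynomial.pderiv i Q) •
        ContinuousLinearMap.proj (R := ℂ) (φ := fun _ : Fin 2 => ℂ) i) z := by
  induction Q using MvPolynomial.induction_on with
  | C c =>
    have h := hasFDerivAt_const (𝕜 := ℂ) c z
    simp only [MvPolynomial.eval_C, MvPolynomial.pderiv_C, map_zero]
    refine h.congr_fderiv ?_
    ext v
    simp
  | add p q hp hq =>
    simp only [map_add]
    refine (hp.fun_add hq).congr_fderiv ?_
    ext v
    simp [Fin.sum_univ_two]
    ring
  | mul_X p j hp =>
    have h := hp.fun_mul ((ContinuousLinearMap.proj (R := ℂ) (φ := fun _ : Fin 2 => ℂ) j).hasFDerivAt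
      (x := z))
    simp only [map_mul, MvPolynomial.eval_X]
    refine h.congr_fderiv ?_
    ext v
    fin_cases j <;>
    simp [MvPolynomial.pderiv_X, Derivation.leibniz, Fin.sum_univ_two] <;> ring

theorem eval_wscale {w : Fin 2 → ℕ} {d : ℕ} {Q : MvPolynomial (Fin 2) ℂ}
    (hQ : ∀ m ∈ Q.support, w 0 * m 0 + w 1 * m 1 = d) (t : ℂ) (z : Fin 2 → ℂ) :
    MvPolynomial.eval (fun i => t ^ w i * z i) Q = t ^ d * MvPolynomial.eval z Q := by
  rw [MvPolynomial.eval_eq', MvPolynomial.eval_eq', Finset.mul_sum]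
  refine Finset.sum_congr rfl fun m hm => ?_
  rw [← hQ m hm]
  simp only [Fin.prod_univ_two, mul_pow, pow_add, ← pow_mul]
  ring

theorem eval_map_conj (Q : MvPolynomial (Fin 2) ℂ) (z : Fin 2 → ℂ) :
    MvPolynomial.eval z (MvPolynomial.map (starRingEnd ℂ) Q) =
      starRingEnd ℂ (MvPolynomial.eval (star z) Q) := by
  rw [MvPolynomial.eval_map, ← MvPolynomial.eval₂_id, MvPolynomial.hom_eval₂]
  congr 1
  ext i
  simp

/-- The complexification `(Q(z) + Q̄(w)) / 2` of `Re Q`. -/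
noncomputable def reC (Q : MvPolynomial (Fin 2) ℂ) (q : (Fin 2 → ℂ) × (Fin 2 → ℂ)) : ℂ :=
  (MvPolynomial.eval q.1 Q + MvPolynomial.eval q.2 (MvPolynomial.map (starRingEnd ℂ) Q)) / 2

theorem reC_conj (Q : MvPolynomial (Fin 2) ℂ) (z : Fin 2 → ℂ) :
    reC Q (z, star z) = ((MvPolynomial.eval z Q).re : ℂ) := by
  rw [reC, eval_map_conj, Complex.re_eq_add_conj]
  simp

theorem reC_wscale {w : Fin 2 → ℕ} {d : ℕ} {Q : MvPolynomial (Fin 2) ℂ}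
    (hQ : ∀ m ∈ Q.support, w 0 * m 0 + w 1 * m 1 = d) (t : ℂ)
    (q : (Fin 2 → ℂ) × (Fin 2 → ℂ)) : reC Q (wscale w t q) = t ^ d * reC Q q := by
  simp only [reC, wscale]
  rw [eval_wscale hQ, eval_wscale fun m hm => hQ m (MvPolynomial.support_map_subset _ _ hm)]
  ring

theorem analyticAt_reC (Q : MvPolynomial (Fin 2) ℂ) (q : (Fin 2 → ℂ) × (Fin 2 → ℂ)) :
    AnalyticAt ℂ (reC Q) q := by
  have h1 := AnalyticOnNhd.eval_mvPolynomial (𝕜 := ℂ) Q q.1 trivial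
  have h2 := AnalyticOnNhd.eval_mvPolynomial (𝕜 := ℂ)
    (MvPolynomial.map (starRingEnd ℂ) Q) q.2 trivial
  exact ((AnalyticAt.fun_comp (f := Prod.fst) h1 analyticAt_fst).add
    (AnalyticAt.fun_comp (f := Prod.snd) h2 analyticAt_snd)).div analyticAt_const two_ne_zero

theorem pderiv_eq_zero_of_fderiv_reC {Q : MvPolynomial (Fin 2) ℂ}
    {q : (Fin 2 → ℂ) × (Fin 2 → ℂ)} (h : fderiv ℂ (reC Q) q = 0) (i : Fin 2) :
    MvPolynomial.eval q.1 (MvPolynomial.pderiv i Q) = 0 ∧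
      MvPolynomial.eval (star q.2) (MvPolynomial.pderiv i Q) = 0 := by
  have hd := (((hasFDerivAt_mvEval Q q.1).comp q hasFDerivAt_fst).add
    ((hasFDerivAt_mvEval (MvPolynomial.map (starRingEnd ℂ) Q) q.2).comp q hasFDerivAt_snd)).mul_const
    (2⁻¹ : ℂ)
  have hd' : HasFDerivAt (reC Q) _ q := hd
  have e := hd'.fderiv.symm.trans h
  have e1 := DFunLike.congr_fun e (Pi.single i 1, 0)
  have e2 := DFunLike.congr_fun e (0, Pi.single i 1)
  constructor
  · fin_cases i <;> simpa [Fin.sum_univ_two] using e1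
  · have e3 : MvPolynomial.eval q.2
        (MvPolynomial.pderiv i (MvPolynomial.map (starRingEnd ℂ) Q)) = 0 := by
      fin_cases i <;> simpa [Fin.sum_univ_two] using e2
    rw [MvPolynomial.pderiv_map, eval_map_conj] at e3
    exact (map_eq_zero _).1 e3

/-- A real critical point of `F` at `0` is a critical point of its complexification: the complex-linear
differential vanishes on the subspace `{(z, z̄)}`, which spans over `ℂ`. -/
theorem fderiv_complexification_zero {F : (Fin 2 → ℂ) → ℝ}
    {FC : ((Fin 2 → ℂ) × (Fin 2 → ℂ)) → ℂ} (hF : DifferentiableAt ℝ F 0)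
    (hsing : fderiv ℝ F 0 = 0) (hFC : IsComplexification F FC) : fderiv ℂ FC 0 = 0 := by
  set L := fderiv ℂ FC 0 with hL
  -- the real-linear embedding `z ↦ (z, z̄)`
  let J : (Fin 2 → ℂ) →L[ℝ] (Fin 2 → ℂ) × (Fin 2 → ℂ) :=
    (ContinuousLinearMap.id ℝ _).prod
      (starL' ℝ (A := Fin 2 → ℂ) : (Fin 2 → ℂ) →L[ℝ] (Fin 2 → ℂ))
  have hJ : ∀ z, J z = (z, star z) := fun z => rfl
  have h1 : HasFDerivAt (fun z => FC (J z)) ((L.restrictScalars ℝ).comp J) 0 := by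
    have hd : HasFDerivAt FC L (J 0) := by
      rw [map_zero]; exact hFC.1.differentiableAt.hasFDerivAt
    exact (hd.restrictScalars ℝ).comp 0 J.hasFDerivAt
  have h2 : HasFDerivAt (fun z => ((F z : ℝ) : ℂ)) (Complex.ofRealCLM.comp (fderiv ℝ F 0)) 0 :=
    Complex.ofRealCLM.hasFDerivAt.comp 0 hF.hasFDerivAt
  have h3 := h1.unique (h2.congr_of_eventuallyEq hFC.2)
  have h4 : ∀ z : Fin 2 → ℂ, L (z, star z) = 0 := by
    intro z
    have := DFunLike.congr_fun h3 z
    rw [hsing] at this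
    simpa [hJ] using this
  refine ContinuousLinearMap.ext fun q => ?_
  obtain ⟨x, y, -, -, hq⟩ := exists_conj_decomp q
  rw [hq, map_add, map_smul, h4, h4]
  simp

/-! ### Isolatedness of the complexified singular set -/

/-- **Proposition (a).** The algebraic dimension of `Sing(M)` is `0`: near the origin of
`ℂ⁴` the only common zero of `F_ℂ` and `dF_ℂ` is `0`, i.e. `Sing(M_ℂ) = {0}` as a germ. -/
theorem stmt_4
 (a b d : ℕ) (ha : 0 < a) (hb : 0 < b) (hd : 0 < d) (hab : Nat.gcd a b = 1)
    (Q : MvPolynomial (Fin 2) ℂ)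
    -- `Q` is quasihomogeneous of type `(a,b)` and quasihomogeneous degree `d`
    (hQqh : ∀ m ∈ Q.support, a * m 0 + b * m 1 = d)
    -- `Q` has an isolated singularity at `0 ∈ ℂ²`
    (hQcrit : ∀ i, MvPolynomial.eval (0 : Fin 2 → ℂ) (MvPolynomial.pderiv i Q) = 0)
    (hQsing : ∀ᶠ z in 𝓝 (0 : Fin 2 → ℂ),
      (∀ i, MvPolynomial.eval z (MvPolynomial.pderiv i Q) = 0) → z = 0)
    (F H : (Fin 2 → ℂ) → ℝ)
    (hF : AnalyticAt ℝ F 0) (hH : AnalyticAt ℝ H 0)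
    -- `F(z) = Re(Q(z)) + H(z, z̄)`
    (hFeq : ∀ᶠ z in 𝓝 (0 : Fin 2 → ℂ), F z = (MvPolynomial.eval z Q).re + H z)
    -- every monomial `z^μ z̄^ν` of the Taylor series of `H` has weighted degree
    -- `a(μ₁+ν₁) + b(μ₂+ν₂) > d`
    (hHord : ∃ r > (0:ℝ), ∀ z : Fin 2 → ℂ, ‖z‖ < r →
      Tendsto (fun lam : ℝ => H (fun i => (lam : ℂ) ^ (if i = 0 then a else b) * z i) / lam ^ d)
        (𝓝[>] 0) (𝓝 0))
    -- `M = {F = 0}` is a singular hypersurface at `0`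
    (hF0 : F 0 = 0) (hsing : fderiv ℝ F 0 = 0)
    (hirr : IrreducibleRGerm F)
    (hLF : LeviFlatGerm F)
    (FC : ((Fin 2 → ℂ) × (Fin 2 → ℂ)) → ℂ) (hFC : IsComplexification F FC)
    :
    ∃ U ∈ 𝓝 (0 : (Fin 2 → ℂ) × (Fin 2 → ℂ)), singMC FC ∩ U = {0} := by
  have hFC0 : FC 0 = 0 := by
    have := hFC.2.self_of_nhds
    rw [hF0, star_zero, Complex.ofReal_zero] at this
    exact this
  have hdFC0 := fderiv_complexification_zero hF.differentiableAt hsing hFC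
  set w : Fin 2 → ℕ := fun i => if i = 0 then a else b with hw_def
  have hw : ∀ i, 0 < w i := fun i => by fin_cases i <;> simp [hw_def, ha, hb]
  have hwW : ∀ i, w i ≤ a + b := fun i => by fin_cases i <;> simp [hw_def]
  have hQw : ∀ m ∈ Q.support, w 0 * m 0 + w 1 * m 1 = d := by simpa [hw_def] using hQqh
  set G : (Fin 2 → ℂ) × (Fin 2 → ℂ) → ℂ := fun p => FC p - reC Q p with hG_def
  have hGan : AnalyticAt ℂ G 0 := hFC.1.sub (analyticAt_reC Q 0)
  have hGbd : ∀ᶠ p in 𝓝 (0 : (Fin 2 → ℂ) × (Fin 2 → ℂ)), ‖G p‖ ≤ ‖G 0‖ + 1 :=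
    (hGan.continuousAt.norm.eventually_lt_const (lt_add_one _)).mono fun p hp => le_of_lt hp
  obtain ⟨r₁, hr₁, hr₁G⟩ := Metric.eventually_nhds_iff_ball.1 (hGan.eventually_analyticAt.and hGbd)
  obtain ⟨r₂, hr₂, hr₂Q⟩ := Metric.eventually_nhds_iff_ball.1 hQsing
  obtain ⟨r₃, hr₃, hr₃H⟩ := hHord
  obtain ⟨R, hR, hR₁, hR₂, hR₃⟩ : ∃ R > 0, R ≤ r₁ ∧ R ≤ r₂ ∧ R ≤ r₃ :=
    ⟨min r₁ (min r₂ r₃), by positivity, by simp, by simp, by simp⟩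
  set C := ‖G 0‖ + 1
  have hCpos : 0 < C := by positivity
  have hG : AnalyticOnNhd ℂ G (ball 0 R) := fun p hp => (hr₁G p (ball_subset_ball hR₁ hp)).1
  have hC : ∀ p ∈ ball (0 : (Fin 2 → ℂ) × (Fin 2 → ℂ)) R, ‖G p‖ ≤ C :=
    fun p hp => (hr₁G p (ball_subset_ball hR₁ hp)).2
  -- on the points `(z, z̄)` the function `G` is `H`
  have h0 : ∀ z : Fin 2 → ℂ, ‖z‖ < R →
      Tendsto (fun t : ℝ => G (wscale w (t : ℂ) (z, star z)) / (t : ℂ) ^ d) (𝓝[>] 0) (𝓝 0) := by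
    intro z hz
    have h1 := (Complex.continuous_ofReal.tendsto 0).comp (hr₃H z (hz.trans_le hR₃))
    rw [Complex.ofReal_zero] at h1
    have hlim : Tendsto (fun t : ℝ => (fun i => (t : ℂ) ^ w i * z i : Fin 2 → ℂ)) (𝓝[>] 0)
        (𝓝 0) := by
      have hcont : Continuous (fun t : ℝ => (fun i => (t : ℂ) ^ w i * z i : Fin 2 → ℂ)) := by
        fun_prop
      have := hcont.tendsto 0
      have e : (fun i => ((0 : ℝ) : ℂ) ^ w i * z i : Fin 2 → ℂ) = 0 := by
        ext i; simp [(hw i).ne']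
      rw [e] at this
      exact this.mono_left nhdsWithin_le_nhds
    refine h1.congr' ?_
    filter_upwards [hlim.eventually hFeq, hlim.eventually hFC.2] with t ht1 ht2
    have e : wscale w (t : ℂ) (z, star z) =
        ((fun i => (t : ℂ) ^ w i * z i), star (fun i => (t : ℂ) ^ w i * z i)) := by
      ext i <;> simp [wscale]
    rw [e]
    simp only [hG_def]
    rw [reC_conj, ht2, ht1]
    simp [hw_def]
  -- the isolated singularity of `Q` bounds the differential of its leading part below on a sphere
  set ρ := R / 8 with hρ_def
  have hρ : 0 < ρ := by positivity
  have hne : ∀ q ∈ sphere (0 : (Fin 2 → ℂ) × (Fin 2 → ℂ)) ρ, 0 < ‖fderiv ℂ (reC Q) q‖ := by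
    intro q hq
    rw [mem_sphere_zero_iff_norm] at hq
    rw [norm_pos_iff]
    intro h
    have h1 := hr₂Q q.1 (by
      rw [mem_ball_zero_iff]; linarith [norm_fst_le q]) fun i => (pderiv_eq_zero_of_fderiv_reC h i).1
    have h2 := hr₂Q (star q.2) (by
      rw [mem_ball_zero_iff, norm_star]; linarith [norm_snd_le q])
      fun i => (pderiv_eq_zero_of_fderiv_reC h i).2
    have hq0 : q = 0 := Prod.ext h1 (star_eq_zero.1 h2)
    rw [hq0, norm_zero] at hq
    exact hρ.ne hq
  have hcont : Continuous (fun q => ‖fderiv ℂ (reC Q) q‖) :=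
    continuous_iff_continuousAt.2 fun q => (analyticAt_reC Q q).fderiv.continuousAt.norm
  obtain ⟨c, hc, hcle⟩ := (isCompact_sphere _ ρ).exists_forall_le' hcont.continuousOn hne
  obtain ⟨ε, hε, hε1, hεc⟩ : ∃ ε > 0, ε ≤ 1 ∧ 2 * C / ρ * ε < c := by
    refine ⟨min 1 (c / (2 * C / ρ) / 2), by positivity, min_le_left _ _, ?_⟩
    have h1 : 0 < 2 * C / ρ := by positivity
    calc 2 * C / ρ * min 1 (c / (2 * C / ρ) / 2) ≤ 2 * C / ρ * (c / (2 * C / ρ) / 2) :=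
          mul_le_mul_of_nonneg_left (min_le_right _ _) h1.le
      _ = c / 2 := by field_simp
      _ < c := by linarith
  have hrad : 0 < ε ^ (a + b) * ρ := by positivity
  refine ⟨ball 0 (ε ^ (a + b) * ρ), ball_mem_nhds _ hrad, ?_⟩
  ext p
  simp only [Set.mem_inter_iff, Set.mem_singleton_iff]
  constructor
  swap
  · rintro rfl
    exact ⟨⟨hFC0, hdFC0⟩, mem_ball_self hrad⟩
  rintro ⟨⟨-, hdp⟩, hpU⟩
  rw [mem_ball_zero_iff] at hpU
  by_contra hp
  have hpρ : ‖p‖ ≤ ρ :=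
    hpU.le.trans (mul_le_of_le_one_left hρ.le (pow_le_one₀ hε.le hε1))
  obtain ⟨t, ht0, ht1, q, hq, hpq⟩ := exists_wscale_eq hw hp hpρ
  have htn : ‖(t : ℂ)‖ = t := by rw [Complex.norm_real, Real.norm_of_nonneg ht0.le]
  have htε : t < ε := by
    have h1 := pow_mul_norm_le_norm_wscale hwW (t := (t : ℂ)) (by rw [htn]; exact ht1) q
    rw [← hpq, hq, htn] at h1
    exact lt_of_pow_lt_pow_left₀ _ hε.le (lt_of_mul_lt_mul_right (h1.trans_lt hpU) hρ.le)
  obtain ⟨hdiff, hle⟩ := norm_fderiv_wscale_le hw hG hC h0 hR (q := q) (t := (t : ℂ)) hq.le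
    (by rw [htn]; linarith)
  -- differentiate `FC (t · q) = t ^ d * reC Q q + G (t · q)` in `q`
  have hfun : (fun q => FC (wscale w (t : ℂ) q)) =
      fun q => (t : ℂ) ^ d * reC Q q + G (wscale w (t : ℂ) q) := by
    funext q
    simp only [hG_def, reC_wscale hQw]
    ring
  have hpR : p ∈ ball (0 : (Fin 2 → ℂ) × (Fin 2 → ℂ)) R := by
    rw [mem_ball_zero_iff]; linarith
  have hFCd : DifferentiableAt ℂ FC p := by
    have := ((hG p hpR).add (analyticAt_reC Q p)).differentiableAt
    have e : G + reC Q = FC := by ext x; simp [hG_def]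
    rwa [e] at this
  have hsc : DifferentiableAt ℂ (fun q => wscale w (t : ℂ) q) q := by
    unfold wscale; fun_prop
  have hL : HasFDerivAt (fun q => FC (wscale w (t : ℂ) q))
      (0 : (Fin 2 → ℂ) × (Fin 2 → ℂ) →L[ℂ] ℂ) q := by
    have h1 : HasFDerivAt FC (0 : (Fin 2 → ℂ) × (Fin 2 → ℂ) →L[ℂ] ℂ) (wscale w (t : ℂ) q) := by
      rw [← hpq, ← hdp]; exact hFCd.hasFDerivAt
    have h2 := h1.comp q hsc.hasFDerivAt
    rwa [ContinuousLinearMap.zero_comp] at h2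
  have hRd := ((analyticAt_reC Q q).differentiableAt.hasFDerivAt.const_mul ((t : ℂ) ^ d)).fun_add
    hdiff.hasFDerivAt
  rw [← hfun] at hRd
  have hsum := hL.unique hRd
  have hnorm : t ^ d * ‖fderiv ℂ (reC Q) q‖ ≤ 2 * (C * t ^ (d + 1)) / ρ := by
    have h1 := eq_neg_of_add_eq_zero_left hsum.symm
    have h2 := congrArg norm h1
    rw [norm_smul, norm_pow, htn, norm_neg] at h2
    rw [h2]
    rwa [htn] at hle
  have hcq := hcle q (by simpa using hq)
  have htd : 0 < t ^ d := by positivity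
  have h5 : t ^ d * ‖fderiv ℂ (reC Q) q‖ ≤ t ^ d * (2 * C / ρ * t) := by
    refine hnorm.trans_eq ?_
    rw [pow_succ]; ring
  have h6 := le_of_mul_le_mul_left h5 htd
  have h7 : 2 * C / ρ * t ≤ 2 * C / ρ * ε :=
    mul_le_mul_of_nonneg_left htε.le (by positivity)
  linarith
end
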